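/- arXiv:2011.12894 — 3 statements merged into one kernel-verified Lean document; each statement's English description precedes it below -/
import Mathlib

section
/- Let ℓ be a prime and m ≥ 0, n ≥ 1 integers. In GSp₄(ℚ_ℓ) one has the double coset decomposition K^{(1)}_{m,n} · diag(ℓ², ℓ², 1, 1) · K^{(1)}_{m,n} = ⋃_{0≤x,y,z<ℓ²} A(x,y,z) · K^{(1)}_{m,n} ∪ ⋃ B(x,y,z,w) · K^{(1)}_{m,n} ∪ ⋃_{0≤x,y<ℓ²} C(x,y) · K^{(1)}_{m,n}, where A(x,y,z) has rows (ℓ²,0,x,y), (0,ℓ²,z,x), (0,0,1,0), (0,0,0,1); B(x,y,z,w) has rows (ℓ², ℓx, wx+ℓy, z), (0, ℓ, w, y), (0, 0, ℓ, −x), (0, 0, 0, 1) with the union over 0 ≤ x, y < ℓ, 1 ≤ w < ℓ, 0 ≤ z < ℓ²; and C(x,y) has rows (ℓ², x, 0, y), (0, 1, 0, 0), (0, 0, ℓ², −x), (0, 0, 0, 1); all the listed left cosets are pairwise distinct. -/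
open Pointwise

noncomputable section

/-- The standard skew-symmetric matrix `J` defining `GSp₄`. -/
def Jmat (p : ℕ) [Fact p.Prime] : Matrix (Fin 4) (Fin 4) ℚ_[p] :=
  !![0, 0, 0, 1; 0, 0, 1, 0; 0, -1, 0, 0; -1, 0, 0, 0]

/-- The subgroup `K^{(1)}_{m,n}` of `GSp₄(ℤ_ℓ)`: integral symplectic similitudes with
multiplier `μ ≡ 1 (mod ℓ^m)` and entries at positions (2,1), (3,1), (4,1), (4,2), (4,3)
divisible by `ℓⁿ`, viewed inside the 4×4 matrices over `ℚ_ℓ`. -/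
def Kmn1 (p : ℕ) [Fact p.Prime] (m n : ℕ) : Set (Matrix (Fin 4) (Fin 4) ℚ_[p]) :=
  {g | (∀ i j, ‖g i j‖ ≤ 1) ∧ ‖g.det‖ = 1 ∧
    (∃ μ : ℚ_[p], ‖μ‖ = 1 ∧ ‖μ - 1‖ ≤ (p : ℝ) ^ (-(m : ℤ)) ∧
      g.transpose * Jmat p * g = μ • Jmat p) ∧
    ‖g 1 0‖ ≤ (p : ℝ) ^ (-(n : ℤ)) ∧ ‖g 2 0‖ ≤ (p : ℝ) ^ (-(n : ℤ)) ∧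
    ‖g 3 0‖ ≤ (p : ℝ) ^ (-(n : ℤ)) ∧ ‖g 3 1‖ ≤ (p : ℝ) ^ (-(n : ℤ)) ∧
    ‖g 3 2‖ ≤ (p : ℝ) ^ (-(n : ℤ))}

/-- The coset representatives `A(x,y,z)` (for `0 ≤ x,y,z < ℓ²`), `B(x,y,z,w)` (for
`0 ≤ x,y < ℓ`, `0 ≤ z < ℓ²`, `1 ≤ w < ℓ`) and `C(x,y)` (for `0 ≤ x,y < ℓ²`). -/
def rep5 (p : ℕ) [Fact p.Prime] :
    (Fin (p ^ 2) × Fin (p ^ 2) × Fin (p ^ 2)) ⊕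
      (Fin p × Fin p × Fin (p ^ 2) × {w : ℕ // 1 ≤ w ∧ w < p}) ⊕
        (Fin (p ^ 2) × Fin (p ^ 2)) → Matrix (Fin 4) (Fin 4) ℚ_[p] :=
  Sum.elim
    (fun i => !![(p : ℚ_[p]) ^ 2, 0, ((i.1 : ℕ) : ℚ_[p]), ((i.2.1 : ℕ) : ℚ_[p]);
                 0, (p : ℚ_[p]) ^ 2, ((i.2.2 : ℕ) : ℚ_[p]), ((i.1 : ℕ) : ℚ_[p]);
                 0, 0, 1, 0;
                 0, 0, 0, 1])
    (Sum.elim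
      (fun i => !![(p : ℚ_[p]) ^ 2, (p : ℚ_[p]) * ((i.1 : ℕ) : ℚ_[p]),
                     ((i.2.2.2 : ℕ) : ℚ_[p]) * ((i.1 : ℕ) : ℚ_[p]) +
                       (p : ℚ_[p]) * ((i.2.1 : ℕ) : ℚ_[p]), ((i.2.2.1 : ℕ) : ℚ_[p]);
                   0, (p : ℚ_[p]), ((i.2.2.2 : ℕ) : ℚ_[p]), ((i.2.1 : ℕ) : ℚ_[p]);
                   0, 0, (p : ℚ_[p]), -((i.1 : ℕ) : ℚ_[p]);
                   0, 0, 0, 1])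
      (fun i => !![(p : ℚ_[p]) ^ 2, ((i.1 : ℕ) : ℚ_[p]), 0, ((i.2 : ℕ) : ℚ_[p]);
                   0, 1, 0, 0;
                   0, 0, (p : ℚ_[p]) ^ 2, -((i.1 : ℕ) : ℚ_[p]);
                   0, 0, 0, 1]))

open Matrix

section helpers

variable {p : ℕ} [Fact p.Prime]

theorem unit_or_dvd (a : ℤ_[p]) : IsUnit a ∨ (p : ℤ_[p]) ∣ a := by
  by_cases h : IsUnit a
  · exact Or.inl h
  · right
    rw [← PadicInt.norm_lt_one_iff_dvd]
    exact lt_of_le_of_ne (PadicInt.norm_le_one a) (fun h' => h (PadicInt.isUnit_iff.2 h'))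

theorem not_dvd_of_unit {a : ℤ_[p]} (h : IsUnit a) : ¬ (p : ℤ_[p]) ∣ a := by
  intro h'
  rw [← PadicInt.norm_lt_one_iff_dvd] at h'
  rw [PadicInt.isUnit_iff] at h
  exact absurd h h'.ne

theorem p_ne : (p : ℤ_[p]) ≠ 0 := by
  exact_mod_cast (Fact.out : p.Prime).ne_zero

theorem exists_appr (a : ℤ_[p]) (k : ℕ) : ∃ (x : ℕ) (e : ℤ_[p]), x < p ^ k ∧
    a = (x : ℤ_[p]) + (p : ℤ_[p]) ^ k * e := by
  have h := PadicInt.appr_spec k a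
  rw [Ideal.mem_span_singleton] at h
  obtain ⟨e, he⟩ := h
  exact ⟨a.appr k, e, PadicInt.appr_lt a k, by linear_combination he⟩

theorem nat_eq_of_dvd {k a b : ℕ} (ha : a < p ^ k) (hb : b < p ^ k)
    (h : (p : ℤ_[p]) ^ k ∣ (a : ℤ_[p]) - b) : a = b := by
  have h2 : ((p : ℤ) ^ k) ∣ ((a : ℤ) - b) := by
    rw [← PadicInt.pow_p_dvd_int_iff]
    push_cast
    exact h
  have h3 : b ≡ a [MOD p ^ k] := by
    rw [Nat.modEq_iff_dvd]
    push_cast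
    exact h2
  exact (Nat.ModEq.eq_of_lt_of_lt h3 hb ha).symm

def JZ (p : ℕ) [Fact p.Prime] : Matrix (Fin 4) (Fin 4) ℤ_[p] :=
  !![0, 0, 0, 1; 0, 0, 1, 0; 0, -1, 0, 0; -1, 0, 0, 0]

def tZ (p : ℕ) [Fact p.Prime] : Matrix (Fin 4) (Fin 4) ℤ_[p] :=
  !![(p : ℤ_[p]) ^ 2, 0, 0, 0; 0, (p : ℤ_[p]) ^ 2, 0, 0; 0, 0, 1, 0; 0, 0, 0, 1]

def AZ (x y z : ℤ_[p]) : Matrix (Fin 4) (Fin 4) ℤ_[p] :=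
  !![(p : ℤ_[p]) ^ 2, 0, x, y; 0, (p : ℤ_[p]) ^ 2, z, x; 0, 0, 1, 0; 0, 0, 0, 1]

def BZ (x y z w : ℤ_[p]) : Matrix (Fin 4) (Fin 4) ℤ_[p] :=
  !![(p : ℤ_[p]) ^ 2, p * x, w * x + p * y, z; 0, p, w, y; 0, 0, p, -x; 0, 0, 0, 1]

def CZ (x y : ℤ_[p]) : Matrix (Fin 4) (Fin 4) ℤ_[p] :=
  !![(p : ℤ_[p]) ^ 2, x, 0, y; 0, 1, 0, 0; 0, 0, (p : ℤ_[p]) ^ 2, -x; 0, 0, 0, 1]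

/-- Divisibility conditions. -/
def DivC (n : ℕ) (h : Matrix (Fin 4) (Fin 4) ℤ_[p]) : Prop :=
  (p : ℤ_[p]) ^ n ∣ h 1 0 ∧ (p : ℤ_[p]) ^ n ∣ h 2 0 ∧ (p : ℤ_[p]) ^ n ∣ h 3 0 ∧
  (p : ℤ_[p]) ^ n ∣ h 3 1 ∧ (p : ℤ_[p]) ^ n ∣ h 3 2

def Kint (m n : ℕ) (h : Matrix (Fin 4) (Fin 4) ℤ_[p]) : Prop :=
  IsUnit h.det ∧
  (∃ μ : ℤ_[p], IsUnit μ ∧ (p : ℤ_[p]) ^ m ∣ μ - 1 ∧ h.transpose * JZ p * h = μ • JZ p) ∧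
  DivC n h

/-- Coefficient map. -/
def cmap (p : ℕ) [Fact p.Prime] : Matrix (Fin 4) (Fin 4) ℤ_[p] →+* Matrix (Fin 4) (Fin 4) ℚ_[p] :=
  (PadicInt.Coe.ringHom (p := p)).mapMatrix

theorem cmap_apply (h : Matrix (Fin 4) (Fin 4) ℤ_[p]) (i j : Fin 4) :
    cmap p h i j = (h i j : ℚ_[p]) := rfl

theorem cmap_inj : Function.Injective (cmap p) := by
  intro a b h
  ext i j
  have := congrFun (congrFun h i) j
  rw [cmap_apply, cmap_apply] at this
  exact Subtype.ext this

theorem cmap_J : cmap p (JZ p) = Jmat p := by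
  ext i j
  fin_cases i <;> fin_cases j <;> simp [cmap_apply, JZ, Jmat]

theorem cmap_t : cmap p (tZ p) = Matrix.diagonal ![(p : ℚ_[p]) ^ 2, (p : ℚ_[p]) ^ 2, 1, 1] := by
  ext i j
  fin_cases i <;> fin_cases j <;> simp [cmap_apply, tZ]

theorem dvd_iff_norm (n : ℕ) (a : ℤ_[p]) :
    (p : ℤ_[p]) ^ n ∣ a ↔ ‖(a : ℚ_[p])‖ ≤ (p : ℝ) ^ (-(n : ℤ)) := by
  rw [← PadicInt.norm_def, PadicInt.norm_le_pow_iff_mem_span_pow, Ideal.mem_span_singleton]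

theorem cmap_det (h : Matrix (Fin 4) (Fin 4) ℤ_[p]) : (cmap p h).det = (h.det : ℚ_[p]) :=
  (RingHom.map_det (PadicInt.Coe.ringHom (p := p)) h).symm

theorem cmap_form (h : Matrix (Fin 4) (Fin 4) ℤ_[p]) (μ : ℤ_[p]) :
    (cmap p h).transpose * Jmat p * cmap p h = (μ : ℚ_[p]) • Jmat p ↔
      h.transpose * JZ p * h = μ • JZ p := by
  rw [← cmap_J]
  have h1 : (cmap p h).transpose = cmap p h.transpose := rfl
  have h2 : (μ : ℚ_[p]) • cmap p (JZ p) = cmap p (μ • JZ p) := by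
    ext i j
    simp [cmap_apply]
  rw [h1, h2, ← map_mul, ← map_mul]
  exact cmap_inj.eq_iff

theorem mem_K_cmap (m n : ℕ) (h : Matrix (Fin 4) (Fin 4) ℤ_[p]) :
    cmap p h ∈ Kmn1 p m n ↔ Kint m n h := by
  unfold Kmn1 Kint DivC
  simp only [Set.mem_ofPred_eq, cmap_apply, ← dvd_iff_norm, cmap_det]
  constructor
  · rintro ⟨-, h2, ⟨μ, h3, h4, h5⟩, h6⟩
    refine ⟨PadicInt.isUnit_iff.2 h2, ⟨⟨μ, h3.le⟩, PadicInt.isUnit_iff.2 h3, ?_, ?_⟩, h6⟩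
    · rw [dvd_iff_norm]; push_cast; exact h4
    · exact (cmap_form h ⟨μ, h3.le⟩).1 h5
  · rintro ⟨h2, ⟨μ, h3, h4, h5⟩, h6⟩
    refine ⟨fun i j => PadicInt.norm_le_one _, PadicInt.isUnit_iff.1 h2,
      ⟨μ, PadicInt.isUnit_iff.1 h3, ?_, (cmap_form h μ).2 h5⟩, h6⟩
    rw [dvd_iff_norm] at h4; push_cast at h4; exact h4

theorem mem_K_iff (m n : ℕ) (g : Matrix (Fin 4) (Fin 4) ℚ_[p]) :
    g ∈ Kmn1 p m n ↔ ∃ h, Kint m n h ∧ cmap p h = g := by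
  constructor
  · intro hg
    have h1 : cmap p (Matrix.of fun i j => (⟨g i j, hg.1 i j⟩ : ℤ_[p])) = g := rfl
    exact ⟨_, (mem_K_cmap m n _).1 (h1.symm ▸ hg), h1⟩
  · rintro ⟨h, h1, rfl⟩
    exact (mem_K_cmap m n h).2 h1

theorem Kint_one (m n : ℕ) : Kint m n (1 : Matrix (Fin 4) (Fin 4) ℤ_[p]) := by
  refine ⟨by simp, ⟨1, isUnit_one, by simp, by simp⟩, ?_⟩
  simp [DivC, Matrix.one_apply]

theorem DivC_mul {n : ℕ} {g h : Matrix (Fin 4) (Fin 4) ℤ_[p]} (hg : DivC n g) (hh : DivC n h) :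
    DivC n (g * h) := by
  obtain ⟨⟨a1, b1⟩, ⟨a2, b2⟩, ⟨a3, b3⟩, ⟨a4, b4⟩, ⟨a5, b5⟩⟩ := hg
  obtain ⟨⟨c1, d1⟩, ⟨c2, d2⟩, ⟨c3, d3⟩, ⟨c4, d4⟩, ⟨c5, d5⟩⟩ := hh
  simp only [DivC, Matrix.mul_apply, Fin.sum_univ_four, b1, b2, b3, b4, b5, d1, d2, d3, d4, d5]
  refine ⟨⟨a1 * h 0 0 + g 1 1 * c1 + g 1 2 * c2 + g 1 3 * c3, by ring⟩,
    ⟨a2 * h 0 0 + g 2 1 * c1 + g 2 2 * c2 + g 2 3 * c3, by ring⟩,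
    ⟨a3 * h 0 0 + a4 * (p ^ n * c1) + a5 * (p ^ n * c2) + g 3 3 * c3, by ring⟩,
    ⟨a3 * h 0 1 + a4 * h 1 1 + a5 * h 2 1 + g 3 3 * c4, by ring⟩,
    ⟨a3 * h 0 2 + a4 * h 1 2 + a5 * h 2 2 + g 3 3 * c5, by ring⟩⟩

theorem form_mul {g h : Matrix (Fin 4) (Fin 4) ℤ_[p]} {μ ν : ℤ_[p]}
    (hg : g.transpose * JZ p * g = μ • JZ p) (hh : h.transpose * JZ p * h = ν • JZ p) :
    (g * h).transpose * JZ p * (g * h) = (μ * ν) • JZ p := by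
  calc (g * h).transpose * JZ p * (g * h)
      = h.transpose * (g.transpose * JZ p * g) * h := by
        rw [Matrix.transpose_mul]; simp only [Matrix.mul_assoc]
    _ = _ := by rw [hg, Matrix.mul_smul, Matrix.smul_mul, hh, smul_smul]

theorem Kint_mul {m n : ℕ} {g h : Matrix (Fin 4) (Fin 4) ℤ_[p]} (hg : Kint m n g)
    (hh : Kint m n h) : Kint m n (g * h) := by
  obtain ⟨a1, ⟨μ, a2, ⟨a, a3⟩, a4⟩, a5⟩ := hg
  obtain ⟨b1, ⟨ν, b2, ⟨b, b3⟩, b4⟩, b5⟩ := hh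
  refine ⟨by rw [Matrix.det_mul]; exact a1.mul b1,
    ⟨μ * ν, a2.mul b2, ⟨a * ν + b, by linear_combination ν * a3 + b3⟩, form_mul a4 b4⟩,
    DivC_mul a5 b5⟩

/-- If `r * g = k * t`, with `r` of multiplier `p²`, then `g` lies in `K` as soon as it satisfies
the divisibility conditions. -/
theorem Kint_of_eq {m n : ℕ} {r g k : Matrix (Fin 4) (Fin 4) ℤ_[p]} (hk : Kint m n k)
    (hr : r.transpose * JZ p * r = ((p : ℤ_[p]) ^ 2) • JZ p) (hd : r.det = (p : ℤ_[p]) ^ 4)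
    (h : r * g = k * tZ p) (hg : DivC n g) : Kint m n g := by
  obtain ⟨a1, ⟨μ, a2, a3, a4⟩, a5⟩ := hk
  have ht : (tZ p).transpose * JZ p * tZ p = ((p : ℤ_[p]) ^ 2) • JZ p := by
    ext i j
    fin_cases i <;> fin_cases j <;> simp [tZ, JZ, Matrix.mul_apply, Fin.sum_univ_four]
  have htd : (tZ p).det = (p : ℤ_[p]) ^ 4 := by
    simp [tZ, Matrix.det_succ_row_zero, Fin.sum_univ_succ]
    ring
  refine ⟨?_, ⟨μ, a2, a3, ?_⟩, hg⟩
  · have h1 : (r * g).det = (k * tZ p).det := by rw [h]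
    rw [Matrix.det_mul, Matrix.det_mul, hd, htd] at h1
    have h2 : g.det = k.det := by
      apply mul_left_cancel₀ (pow_ne_zero 4 (p_ne (p := p)))
      rw [h1]; ring
    rwa [h2]
  · have h1 := form_mul a4 ht
    rw [← h] at h1
    have h2 : (r * g).transpose * JZ p * (r * g)
      = ((p : ℤ_[p]) ^ 2) • (g.transpose * JZ p * g) := by
      calc (r * g).transpose * JZ p * (r * g)
          = g.transpose * (r.transpose * JZ p * r) * g := by
            rw [Matrix.transpose_mul]; simp only [Matrix.mul_assoc]
        _ = _ := by rw [hr, Matrix.mul_smul, Matrix.smul_mul]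
    rw [h2, mul_comm, ← smul_smul] at h1
    ext i j
    have h3 := congrFun (congrFun h1 i) j
    rw [Matrix.smul_apply, Matrix.smul_apply, smul_eq_mul, smul_eq_mul] at h3
    exact mul_left_cancel₀ (pow_ne_zero 2 (p_ne (p := p))) h3

theorem AZ_form (x y z : ℤ_[p]) :
    (AZ x y z).transpose * JZ p * AZ x y z = ((p : ℤ_[p]) ^ 2) • JZ p := by
  ext i j
  fin_cases i <;> fin_cases j <;> simp [AZ, JZ, Matrix.mul_apply, Fin.sum_univ_four] <;> ring

theorem BZ_form (x y z w : ℤ_[p]) :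
    (BZ x y z w).transpose * JZ p * BZ x y z w = ((p : ℤ_[p]) ^ 2) • JZ p := by
  ext i j
  fin_cases i <;> fin_cases j <;> simp [BZ, JZ, Matrix.mul_apply, Fin.sum_univ_four] <;> ring

theorem CZ_form (x y : ℤ_[p]) :
    (CZ x y).transpose * JZ p * CZ x y = ((p : ℤ_[p]) ^ 2) • JZ p := by
  ext i j
  fin_cases i <;> fin_cases j <;> simp [CZ, JZ, Matrix.mul_apply, Fin.sum_univ_four] <;> ring

theorem AZ_det (x y z : ℤ_[p]) : (AZ x y z).det = (p : ℤ_[p]) ^ 4 := by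
  simp [AZ, Matrix.det_succ_row_zero, Fin.sum_univ_succ]
  ring

theorem BZ_det (x y z w : ℤ_[p]) : (BZ x y z w).det = (p : ℤ_[p]) ^ 4 := by
  simp [BZ, Matrix.det_succ_row_zero, Fin.sum_univ_succ, Fin.succAbove]
  ring

theorem CZ_det (x y : ℤ_[p]) : (CZ x y).det = (p : ℤ_[p]) ^ 4 := by
  simp [CZ, Matrix.det_succ_row_zero, Fin.sum_univ_succ, Fin.succAbove]
  ring

/-- Relations between the entries of an element of `K`. -/
theorem Kint_rel {m n : ℕ} (hn : 1 ≤ n) {k : Matrix (Fin 4) (Fin 4) ℤ_[p]} (hk : Kint m n k) :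
    (k 0 2 * k 3 3 + k 1 2 * k 2 3 - k 2 2 * k 1 3 - k 3 2 * k 0 3 = 0) ∧
    IsUnit (k 3 3) ∧ (p : ℤ_[p]) ∣ k 3 2 ∧ (IsUnit (k 2 2) ∨ IsUnit (k 1 2)) := by
  obtain ⟨-, ⟨μ, h1, -, h2⟩, h3⟩ := hk
  have hp : (p : ℤ_[p]) ∣ (p : ℤ_[p]) ^ n := dvd_pow_self _ (by omega)
  obtain ⟨d1, d2, d3, d4, d5⟩ := h3
  replace d1 := hp.trans d1
  replace d2 := hp.trans d2
  replace d3 := hp.trans d3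
  replace d4 := hp.trans d4
  replace d5 := hp.trans d5
  have e23 := congrFun (congrFun h2 2) 3
  have e03 := congrFun (congrFun h2 0) 3
  have e12 := congrFun (congrFun h2 1) 2
  simp [JZ, Matrix.mul_apply, Fin.sum_univ_four] at e23 e03 e12
  have hμ := not_dvd_of_unit h1
  refine ⟨by linear_combination e23, ?_, d5, ?_⟩
  · refine (unit_or_dvd _).resolve_right fun h => hμ ?_
    obtain ⟨a1, b1⟩ := d1
    obtain ⟨a2, b2⟩ := d2
    obtain ⟨a3, b3⟩ := d3
    obtain ⟨a4, b4⟩ := h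
    rw [b1, b2, b3, b4] at e03
    exact ⟨k 0 0 * a4 + a1 * k 2 3 - a2 * k 1 3 - a3 * k 0 3, by linear_combination -e03⟩
  · by_contra hc
    push Not at hc
    have h5 := (unit_or_dvd _).resolve_left hc.1
    have h6 := (unit_or_dvd _).resolve_left hc.2
    apply hμ
    obtain ⟨a1, b1⟩ := d4
    obtain ⟨a2, b2⟩ := d5
    obtain ⟨a3, b3⟩ := h5
    obtain ⟨a4, b4⟩ := h6
    rw [b1, b2, b3, b4] at e12
    exact ⟨k 0 1 * a2 + k 1 1 * a3 - k 2 1 * a4 - a1 * k 0 2, by linear_combination -e12⟩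

theorem caseA {m n : ℕ} {k : Matrix (Fin 4) (Fin 4) ℤ_[p]} (hk : Kint m n k)
    (hr : k 0 2 * k 3 3 + k 1 2 * k 2 3 - k 2 2 * k 1 3 - k 3 2 * k 0 3 = 0)
    (hD : IsUnit (k 2 2 * k 3 3 - k 2 3 * k 3 2)) :
    ∃ x y z : ℕ, x < p ^ 2 ∧ y < p ^ 2 ∧ z < p ^ 2 ∧ ∃ g, Kint m n g ∧
      AZ (x : ℤ_[p]) y z * g = k * tZ p := by
  obtain ⟨D, hD⟩ := hD.exists_right_inv
  obtain ⟨x, ex, hx, hx'⟩ := exists_appr ((k 0 2 * k 3 3 - k 0 3 * k 3 2) * D) 2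
  obtain ⟨y, ey, hy, hy'⟩ := exists_appr ((k 0 3 * k 2 2 - k 0 2 * k 2 3) * D) 2
  obtain ⟨z, ez, hz, hz'⟩ := exists_appr ((k 1 2 * k 3 3 - k 1 3 * k 3 2) * D) 2
  refine ⟨x, y, z, hx, hy, hz, ?_⟩
  have e02 : k 0 2 - x * k 2 2 - y * k 3 2 = p ^ 2 * (ex * k 2 2 + ey * k 3 2) := by
    linear_combination k 2 2 * hx' + k 3 2 * hy' - k 0 2 * hD
  have e03 : k 0 3 - x * k 2 3 - y * k 3 3 = p ^ 2 * (ex * k 2 3 + ey * k 3 3) := by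
    linear_combination k 2 3 * hx' + k 3 3 * hy' - k 0 3 * hD
  have e12 : k 1 2 - z * k 2 2 - x * k 3 2 = p ^ 2 * (ez * k 2 2 + ex * k 3 2) := by
    linear_combination k 2 2 * hz' + k 3 2 * hx' - k 1 2 * hD - k 3 2 * D * hr
  have e13 : k 1 3 - z * k 2 3 - x * k 3 3 = p ^ 2 * (ez * k 2 3 + ex * k 3 3) := by
    linear_combination k 2 3 * hz' + k 3 3 * hx' - k 1 3 * hD - k 3 3 * D * hr
  have hg : ∃ g : Matrix (Fin 4) (Fin 4) ℤ_[p], g =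
    !![k 0 0 - x * k 2 0 - y * k 3 0, k 0 1 - x * k 2 1 - y * k 3 1,
        ex * k 2 2 + ey * k 3 2, ex * k 2 3 + ey * k 3 3;
       k 1 0 - z * k 2 0 - x * k 3 0, k 1 1 - z * k 2 1 - x * k 3 1,
        ez * k 2 2 + ex * k 3 2, ez * k 2 3 + ex * k 3 3;
       p ^ 2 * k 2 0, p ^ 2 * k 2 1, k 2 2, k 2 3;
       p ^ 2 * k 3 0, p ^ 2 * k 3 1, k 3 2, k 3 3] := ⟨_, rfl⟩
  obtain ⟨g, hg⟩ := hg
  have heq : AZ (x : ℤ_[p]) y z * g = k * tZ p := by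
    rw [hg]
    ext i j
    fin_cases i <;> fin_cases j <;> simp [AZ, tZ, Matrix.mul_apply, Fin.sum_univ_four]
    all_goals first
      | ring1
      | linear_combination -e02
      | linear_combination -e03
      | linear_combination -e12
      | linear_combination -e13
  refine ⟨g, Kint_of_eq hk (AZ_form _ _ _) (AZ_det _ _ _) heq ?_, heq⟩
  obtain ⟨-, -, d1, d2, d3, d4, d5⟩ := hk
  rw [hg]
  refine ⟨?_, ?_, ?_, ?_, ?_⟩ <;> simp
  · exact dvd_sub (dvd_sub d1 (d2.mul_left _)) (d3.mul_left _)
  · exact d2.mul_left _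
  · exact d3.mul_left _
  · exact d4.mul_left _
  · exact d5

theorem caseC {m n : ℕ} {k : Matrix (Fin 4) (Fin 4) ℤ_[p]} (hk : Kint m n k)
    (hr : k 0 2 * k 3 3 + k 1 2 * k 2 3 - k 2 2 * k 1 3 - k 3 2 * k 0 3 = 0)
    (h33 : IsUnit (k 3 3))
    (hD : (p : ℤ_[p]) ^ 2 ∣ (k 2 2 * k 3 3 - k 2 3 * k 3 2)) :
    ∃ x y : ℕ, x < p ^ 2 ∧ y < p ^ 2 ∧ ∃ g, Kint m n g ∧
      CZ (x : ℤ_[p]) y * g = k * tZ p := by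
  obtain ⟨d, hd⟩ := hD
  obtain ⟨u, hu⟩ := h33.exists_right_inv
  obtain ⟨x, ex, hx, hx'⟩ := exists_appr (- k 2 3 * u) 2
  obtain ⟨y, ey, hy, hy'⟩ := exists_appr ((k 0 3 - (x : ℤ_[p]) * k 1 3) * u) 2
  refine ⟨x, y, hx, hy, ?_⟩
  have e3 : k 2 3 + x * k 3 3 = p ^ 2 * (- ex * k 3 3) := by
    linear_combination - k 3 3 * hx' - k 2 3 * hu
  obtain ⟨a2, e2⟩ : ∃ a, k 2 2 + x * k 3 2 = p ^ 2 * a := by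
    refine ⟨u * (d + k 3 2 * (- ex * k 3 3)), ?_⟩
    linear_combination u * hd + u * k 3 2 * e3 - (k 2 2 + x * k 3 2) * hu
  have f3 : k 0 3 - x * k 1 3 - y * k 3 3 = p ^ 2 * (ey * k 3 3) := by
    linear_combination k 3 3 * hy' - (k 0 3 - x * k 1 3) * hu
  obtain ⟨b2, f2⟩ : ∃ a, k 0 2 - x * k 1 2 - y * k 3 2 = p ^ 2 * a := by
    refine ⟨u * (k 1 2 * ex * k 3 3 + k 1 3 * a2 + k 3 2 * ey * k 3 3), ?_⟩
    linear_combination u * hr - u * k 1 2 * e3 + u * k 1 3 * e2 + u * k 3 2 * f3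
      - (k 0 2 - x * k 1 2 - y * k 3 2) * hu
  have hg : ∃ g : Matrix (Fin 4) (Fin 4) ℤ_[p], g =
    !![k 0 0 - x * k 1 0 - y * k 3 0, k 0 1 - x * k 1 1 - y * k 3 1, b2, ey * k 3 3;
       p ^ 2 * k 1 0, p ^ 2 * k 1 1, k 1 2, k 1 3;
       k 2 0 + x * k 3 0, k 2 1 + x * k 3 1, a2, - ex * k 3 3;
       p ^ 2 * k 3 0, p ^ 2 * k 3 1, k 3 2, k 3 3] := ⟨_, rfl⟩
  obtain ⟨g, hg⟩ := hg
  have heq : CZ (x : ℤ_[p]) y * g = k * tZ p := by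
    rw [hg]
    ext i j
    fin_cases i <;> fin_cases j <;> simp [CZ, tZ, Matrix.mul_apply, Fin.sum_univ_four]
    all_goals first
      | ring1
      | linear_combination -e2
      | linear_combination -e3
      | linear_combination -f2
      | linear_combination -f3
  refine ⟨g, Kint_of_eq hk (CZ_form _ _) (CZ_det _ _) heq ?_, heq⟩
  obtain ⟨-, -, d1, d2, d3, d4, d5⟩ := hk
  rw [hg]
  refine ⟨?_, ?_, ?_, ?_, ?_⟩ <;> simp
  · exact d1.mul_left _
  · exact dvd_add d2 (d3.mul_left _)
  · exact d3.mul_left _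
  · exact d4.mul_left _
  · exact d5

theorem caseB {m n : ℕ} {k : Matrix (Fin 4) (Fin 4) ℤ_[p]} (hk : Kint m n k)
    (hr : k 0 2 * k 3 3 + k 1 2 * k 2 3 - k 2 2 * k 1 3 - k 3 2 * k 0 3 = 0)
    (h33 : IsUnit (k 3 3)) (h12 : IsUnit (k 1 2)) (h32 : (p : ℤ_[p]) ∣ k 3 2) (d : ℤ_[p])
    (hd : k 2 2 * k 3 3 - k 2 3 * k 3 2 = p * d) (hdu : IsUnit d) :
    ∃ x y z w : ℕ, x < p ∧ y < p ∧ z < p ^ 2 ∧ 1 ≤ w ∧ w < p ∧ ∃ g, Kint m n g ∧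
      BZ (x : ℤ_[p]) y z w * g = k * tZ p := by
  obtain ⟨c, hc⟩ := h32
  obtain ⟨u, hu⟩ := h33.exists_right_inv
  obtain ⟨x, ex, hx, hx'⟩ := exists_appr (- k 2 3 * u) 1
  rw [pow_one] at hx hx'
  obtain ⟨a3, e3⟩ : ∃ a, k 2 3 + x * k 3 3 = p * a :=
    ⟨- ex * k 3 3, by linear_combination - k 3 3 * hx' - k 2 3 * hu⟩
  obtain ⟨a2, e2⟩ : ∃ a, k 2 2 + x * k 3 2 = p * a := by
    refine ⟨u * (d + k 3 2 * a3), ?_⟩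
    linear_combination u * hd + u * k 3 2 * e3 - (k 2 2 + x * k 3 2) * hu
  have ha2 : k 3 3 * a2 = d + k 3 2 * a3 := by
    apply mul_left_cancel₀ (p_ne (p := p))
    linear_combination - k 3 3 * e2 + hd + k 3 2 * e3
  have ha2u : IsUnit a2 := by
    refine (unit_or_dvd _).resolve_right fun h => not_dvd_of_unit hdu ?_
    obtain ⟨b, hb⟩ := h
    refine ⟨k 3 3 * b - c * a3, ?_⟩
    linear_combination -ha2 + k 3 3 * hb - a3 * hc
  obtain ⟨v, hv⟩ := ha2u.exists_right_inv
  obtain ⟨w, ew, hw, hw'⟩ := exists_appr (k 1 2 * v) 1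
  rw [pow_one] at hw hw'
  have hw1 : 1 ≤ w := by
    rw [Nat.one_le_iff_ne_zero]
    rintro rfl
    refine not_dvd_of_unit h12 ⟨ew * a2, ?_⟩
    push_cast at hw'
    linear_combination a2 * hw' - k 1 2 * hv
  obtain ⟨y, ey, hy, hy'⟩ := exists_appr ((k 1 3 - (w : ℤ_[p]) * a3) * u) 1
  rw [pow_one] at hy hy'
  obtain ⟨b3, f3⟩ : ∃ b, k 1 3 - w * a3 - y * k 3 3 = p * b :=
    ⟨ey * k 3 3, by linear_combination k 3 3 * hy' - (k 1 3 - w * a3) * hu⟩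
  obtain ⟨b2, f2⟩ : ∃ b, k 1 2 - w * a2 - y * k 3 2 = p * b :=
    ⟨ew * a2 - y * c, by linear_combination a2 * hw' - k 1 2 * hv - y * hc⟩
  obtain ⟨z, ez, hz, hz'⟩ := exists_appr ((k 0 3 - (x : ℤ_[p]) * k 1 3 - (y : ℤ_[p]) * k 2 3) * u) 2
  obtain ⟨c3, g3⟩ : ∃ b, k 0 3 - z * k 3 3 - x * k 1 3 - y * k 2 3 = p ^ 2 * b :=
    ⟨ez * k 3 3, by linear_combination k 3 3 * hz' - (k 0 3 - x * k 1 3 - y * k 2 3) * hu⟩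
  obtain ⟨c2, g2⟩ : ∃ b, k 0 2 - z * k 3 2 - x * k 1 2 - y * k 2 2 = p ^ 2 * b := by
    have key : k 3 3 * (k 0 2 - z * k 3 2 - x * k 1 2 - y * k 2 2) =
        p ^ 2 * (k 3 2 * c3 - b2 * a3 + b3 * a2) := by
      linear_combination hr + k 3 2 * g3 - k 1 2 * e3 + k 1 3 * e2 - y * hd
        + p * (- a3 * f2 + a2 * f3) + p * y * ha2
    refine ⟨u * (k 3 2 * c3 - b2 * a3 + b3 * a2), ?_⟩
    linear_combination u * key - (k 0 2 - z * k 3 2 - x * k 1 2 - y * k 2 2) * hu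
  refine ⟨x, y, z, w, hx, hy, hz, hw1, hw, ?_⟩
  have hg : ∃ g : Matrix (Fin 4) (Fin 4) ℤ_[p], g =
    !![k 0 0 - z * k 3 0 - x * k 1 0 - y * k 2 0, k 0 1 - z * k 3 1 - x * k 1 1 - y * k 2 1,
        c2, c3;
       p * k 1 0 - w * (k 2 0 + x * k 3 0) - p * y * k 3 0,
        p * k 1 1 - w * (k 2 1 + x * k 3 1) - p * y * k 3 1, b2, b3;
       p * (k 2 0 + x * k 3 0), p * (k 2 1 + x * k 3 1), a2, a3;
       p ^ 2 * k 3 0, p ^ 2 * k 3 1, k 3 2, k 3 3] := ⟨_, rfl⟩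
  obtain ⟨g, hg⟩ := hg
  have heq : BZ (x : ℤ_[p]) y z w * g = k * tZ p := by
    rw [hg]
    ext i j
    fin_cases i <;> fin_cases j <;> simp [BZ, tZ, Matrix.mul_apply, Fin.sum_univ_four]
    all_goals first
      | ring1
      | linear_combination -e2
      | linear_combination -e3
      | linear_combination -f2
      | linear_combination -f3
      | linear_combination -g2 - x * f2 - y * e2
      | linear_combination -g3 - x * f3 - y * e3
  refine ⟨g, Kint_of_eq hk (BZ_form _ _ _ _) (BZ_det _ _ _ _) heq ?_, heq⟩
  obtain ⟨-, -, d1, d2, d3, d4, d5⟩ := hk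
  rw [hg]
  refine ⟨?_, ?_, ?_, ?_, ?_⟩ <;> simp
  · exact dvd_sub (dvd_sub (d1.mul_left _) ((dvd_add d2 (d3.mul_left _)).mul_left _))
      (d3.mul_left _)
  · exact (dvd_add d2 (d3.mul_left _)).mul_left _
  · exact d3.mul_left _
  · exact d4.mul_left _
  · exact d5

/-- Block elements: unipotent times Levi with middle block `[a b; c d]` of determinant one. -/
theorem Kint_of_unip (m n : ℕ) {h : Matrix (Fin 4) (Fin 4) ℤ_[p]} (hd : h.det = 1)
    (hJ : h.transpose * JZ p * h = JZ p) (hdiv : DivC n h) : Kint m n h :=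
  ⟨by rw [hd]; exact isUnit_one, ⟨1, isUnit_one, by simp, by rw [hJ, one_smul]⟩, hdiv⟩

theorem Kint_U (m n : ℕ) (x y z : ℤ_[p]) :
    Kint m n !![1, x, y, z; 0, 1, 0, y; 0, 0, 1, -x; 0, 0, 0, 1] := by
  apply Kint_of_unip
  · simp [Matrix.det_succ_row_zero, Fin.sum_univ_succ, Fin.succAbove]
  · ext i j
    fin_cases i <;> fin_cases j <;> simp [JZ, Matrix.mul_apply, Fin.sum_univ_four]
    all_goals ring
  · simp [DivC]

theorem Kint_M (m n : ℕ) (a b c d : ℤ_[p]) (h : a * d - b * c = 1) :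
    Kint m n !![1, 0, 0, 0; 0, a, b, 0; 0, c, d, 0; 0, 0, 0, 1] := by
  apply Kint_of_unip
  · simp [Matrix.det_succ_row_zero, Fin.sum_univ_succ, Fin.succAbove]
    linear_combination h
  · ext i j
    fin_cases i <;> fin_cases j <;> simp [JZ, Matrix.mul_apply, Fin.sum_univ_four]
    all_goals first
      | ring1
      | linear_combination h
      | linear_combination -h
  · simp [DivC]

theorem AZ_mem (m n : ℕ) (x y z : ℤ_[p]) : ∃ k k', Kint m n k ∧ Kint m n k' ∧
    AZ x y z = k * tZ p * k' := by
  refine ⟨_, 1, Kint_mul (Kint_U m n 0 x y) (Kint_M m n 1 z 0 1 (by ring)), Kint_one m n, ?_⟩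
  ext i j
  fin_cases i <;> fin_cases j <;> simp [AZ, tZ, Matrix.mul_apply, Fin.sum_univ_four]

theorem BZ_mem (m n : ℕ) (x y z w : ℤ_[p]) (hw : IsUnit w) :
    ∃ k k', Kint m n k ∧ Kint m n k' ∧ BZ x y z w = k * tZ p * k' := by
  obtain ⟨v, hv⟩ := hw.exists_right_inv
  refine ⟨_, _, Kint_mul (Kint_U m n x y z)
    (Kint_M m n 0 w (-v) p (by linear_combination hv)),
    Kint_M m n 1 0 (v * (p : ℤ_[p])) 1 (by ring), ?_⟩
  ext i j
  fin_cases i <;> fin_cases j <;> simp [BZ, tZ, Matrix.mul_apply, Fin.sum_univ_four]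
  all_goals first
    | ring1
    | linear_combination -p * hv
    | linear_combination -p * x * hv
    | linear_combination p * hv
    | linear_combination p * x * hv

theorem CZ_mem (m n : ℕ) (x y : ℤ_[p]) :
    ∃ k k', Kint m n k ∧ Kint m n k' ∧ CZ x y = k * tZ p * k' := by
  refine ⟨_, _, Kint_mul (Kint_U m n x 0 y) (Kint_M m n 0 1 (-1) 0 (by ring)),
    Kint_M m n 0 (-1) 1 0 (by ring), ?_⟩
  ext i j
  fin_cases i <;> fin_cases j <;> simp [CZ, tZ, Matrix.mul_apply, Fin.sum_univ_four]

theorem p_mul_ne_one (a : ℤ_[p]) : (1 : ℤ_[p]) ≠ p * a := fun h =>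
  not_dvd_of_unit isUnit_one ⟨a, h⟩

theorem AZ_inj {x y z x' y' z' : ℕ} (hx : x < p ^ 2) (hy : y < p ^ 2) (hz : z < p ^ 2)
    (hx' : x' < p ^ 2) (hy' : y' < p ^ 2) (hz' : z' < p ^ 2) (k : Matrix (Fin 4) (Fin 4) ℤ_[p])
    (h : AZ (x : ℤ_[p]) y z = AZ (x' : ℤ_[p]) y' z' * k) : x = x' ∧ y = y' ∧ z = z' := by
  have e := fun i j => congrFun (congrFun h i) j
  have e32 := e 3 2
  have e33 := e 3 3
  have e22 := e 2 2
  have e23 := e 2 3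
  have e13 := e 1 3
  have e12 := e 1 2
  have e03 := e 0 3
  simp [AZ, Matrix.mul_apply, Fin.sum_univ_four] at e32 e33 e22 e23 e13 e12 e03
  rw [← e33, ← e23] at e13 e03
  rw [← e32, ← e22] at e12
  refine ⟨nat_eq_of_dvd hx hx' ⟨k 1 3, by linear_combination e13⟩,
    nat_eq_of_dvd hy hy' ⟨k 0 3, by linear_combination e03⟩,
    nat_eq_of_dvd hz hz' ⟨k 1 2, by linear_combination e12⟩⟩

theorem CZ_inj {x y x' y' : ℕ} (hx : x < p ^ 2) (hy : y < p ^ 2)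
    (hx' : x' < p ^ 2) (hy' : y' < p ^ 2) (k : Matrix (Fin 4) (Fin 4) ℤ_[p])
    (h : CZ (x : ℤ_[p]) y = CZ (x' : ℤ_[p]) y' * k) : x = x' ∧ y = y' := by
  have e := fun i j => congrFun (congrFun h i) j
  have e33 := e 3 3
  have e23 := e 2 3
  have e13 := e 1 3
  have e03 := e 0 3
  simp [CZ, Matrix.mul_apply, Fin.sum_univ_four] at e33 e23 e13 e03
  rw [← e33] at e03 e23
  rw [← e13] at e03
  refine ⟨nat_eq_of_dvd hx hx' ⟨-k 2 3, by linear_combination -e23⟩,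
    nat_eq_of_dvd hy hy' ⟨k 0 3, by linear_combination e03⟩⟩

theorem BZ_inj {x y z w x' y' z' w' : ℕ} (hx : x < p) (hy : y < p) (hz : z < p ^ 2) (hw : w < p)
    (hx' : x' < p) (hy' : y' < p) (hz' : z' < p ^ 2) (hw' : w' < p)
    (k : Matrix (Fin 4) (Fin 4) ℤ_[p])
    (h : BZ (x : ℤ_[p]) y z w = BZ (x' : ℤ_[p]) y' z' w' * k) :
    x = x' ∧ y = y' ∧ z = z' ∧ w = w' := by
  have e := fun i j => congrFun (congrFun h i) j
  have e32 := e 3 2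
  have e33 := e 3 3
  have e22 := e 2 2
  have e23 := e 2 3
  have e13 := e 1 3
  have e12 := e 1 2
  have e03 := e 0 3
  simp only [BZ, Matrix.mul_apply, Fin.sum_univ_four] at e32 e33 e22 e23 e13 e12 e03
  simp at e32 e33 e23 e13 e12 e03
  simp [-mul_eq_left₀, -left_eq_mul₀] at e22
  rw [← e33] at e23 e13 e03
  rw [← e32] at e22 e12
  have hp := p_ne (p := p)
  have k22 : k 2 2 = 1 := mul_left_cancel₀ hp (by linear_combination -e22)
  rw [k22] at e12
  have h1 : x = x' := nat_eq_of_dvd (k := 1) (by simpa using hx) (by simpa using hx')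
    ⟨-k 2 3, by linear_combination -e23⟩
  subst h1
  have k23 : k 2 3 = 0 := mul_left_cancel₀ hp (by linear_combination -e23)
  rw [k23] at e13 e03
  have h2 : y = y' := nat_eq_of_dvd (k := 1) (by simpa using hy) (by simpa using hy')
    ⟨k 1 3, by linear_combination e13⟩
  subst h2
  have k13 : k 1 3 = 0 := mul_left_cancel₀ hp (by linear_combination -e13)
  rw [k13] at e03
  exact ⟨rfl, rfl, nat_eq_of_dvd hz hz' ⟨k 0 3, by linear_combination e03⟩,
    nat_eq_of_dvd (k := 1) (by simpa using hw) (by simpa using hw')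
    ⟨k 1 2, by linear_combination e12⟩⟩

theorem A_ne_B {x y z x' y' z' w' : ℤ_[p]} (k : Matrix (Fin 4) (Fin 4) ℤ_[p])
    (h : AZ x y z = BZ x' y' z' w' * k) : False := by
  have e := fun i j => congrFun (congrFun h i) j
  have e32 := e 3 2
  have e22 := e 2 2
  simp [AZ, BZ, Matrix.mul_apply, Fin.sum_univ_four] at e32 e22
  rw [← e32] at e22
  exact p_mul_ne_one (k 2 2) (by linear_combination e22)

theorem A_ne_C {x y z x' y' : ℤ_[p]} (k : Matrix (Fin 4) (Fin 4) ℤ_[p])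
    (h : AZ x y z = CZ x' y' * k) : False := by
  have e := fun i j => congrFun (congrFun h i) j
  have e32 := e 3 2
  have e22 := e 2 2
  simp [AZ, CZ, Matrix.mul_apply, Fin.sum_univ_four] at e32 e22
  rw [← e32] at e22
  exact p_mul_ne_one ((p : ℤ_[p]) * k 2 2) (by linear_combination e22)

theorem B_ne_C {x y z w x' y' : ℤ_[p]} (k : Matrix (Fin 4) (Fin 4) ℤ_[p])
    (h : BZ x y z w = CZ x' y' * k) : False := by
  have e := fun i j => congrFun (congrFun h i) j
  have e32 := e 3 2
  have e22 := e 2 2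
  simp [BZ, CZ, Matrix.mul_apply, Fin.sum_univ_four] at e32 e22
  rw [← e32] at e22
  refine p_mul_ne_one (k 2 2) (mul_left_cancel₀ (p_ne (p := p)) ?_)
  linear_combination e22

theorem rep_A (i : Fin (p ^ 2) × Fin (p ^ 2) × Fin (p ^ 2)) :
    rep5 p (Sum.inl i) =
      cmap p (AZ ((i.1 : ℕ) : ℤ_[p]) ((i.2.1 : ℕ) : ℤ_[p]) ((i.2.2 : ℕ) : ℤ_[p])) := by
  ext a b
  fin_cases a <;> fin_cases b <;> simp [rep5, cmap_apply, AZ]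

theorem rep_B (i : Fin p × Fin p × Fin (p ^ 2) × {w : ℕ // 1 ≤ w ∧ w < p}) :
    rep5 p (Sum.inr (Sum.inl i)) =
      cmap p (BZ ((i.1 : ℕ) : ℤ_[p]) ((i.2.1 : ℕ) : ℤ_[p]) ((i.2.2.1 : ℕ) : ℤ_[p])
        ((i.2.2.2 : ℕ) : ℤ_[p])) := by
  ext a b
  fin_cases a <;> fin_cases b <;> simp [rep5, cmap_apply, BZ]

theorem rep_C (i : Fin (p ^ 2) × Fin (p ^ 2)) :
    rep5 p (Sum.inr (Sum.inr i)) =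
      cmap p (CZ ((i.1 : ℕ) : ℤ_[p]) ((i.2 : ℕ) : ℤ_[p])) := by
  ext a b
  fin_cases a <;> fin_cases b <;> simp [rep5, cmap_apply, CZ]

theorem unit_of_lt {w : ℕ} (h1 : 1 ≤ w) (h2 : w < p) : IsUnit (w : ℤ_[p]) := by
  refine (unit_or_dvd _).resolve_right fun h => ?_
  have := nat_eq_of_dvd (p := p) (k := 1) (a := w) (b := 0) (by simpa using h2)
    (by simpa using (by omega : 0 < p)) (by simpa using h)
  omega

theorem rep_mem (m n : ℕ) (i) : ∃ k k' : Matrix (Fin 4) (Fin 4) ℤ_[p],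
    Kint m n k ∧ Kint m n k' ∧ rep5 p i = cmap p (k * tZ p * k') := by
  rcases i with i | i | i
  · obtain ⟨k, k', h1, h2, h3⟩ := AZ_mem m n ((i.1 : ℕ) : ℤ_[p]) ((i.2.1 : ℕ) : ℤ_[p])
      ((i.2.2 : ℕ) : ℤ_[p])
    exact ⟨k, k', h1, h2, by rw [rep_A, h3]⟩
  · obtain ⟨k, k', h1, h2, h3⟩ := BZ_mem m n ((i.1 : ℕ) : ℤ_[p]) ((i.2.1 : ℕ) : ℤ_[p])
      ((i.2.2.1 : ℕ) : ℤ_[p]) ((i.2.2.2 : ℕ) : ℤ_[p])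
      (unit_of_lt i.2.2.2.2.1 i.2.2.2.2.2)
    exact ⟨k, k', h1, h2, by rw [rep_B, h3]⟩
  · obtain ⟨k, k', h1, h2, h3⟩ := CZ_mem m n ((i.1 : ℕ) : ℤ_[p]) ((i.2 : ℕ) : ℤ_[p])
    exact ⟨k, k', h1, h2, by rw [rep_C, h3]⟩

theorem exists_rep {m n : ℕ} (hn : 1 ≤ n) {k : Matrix (Fin 4) (Fin 4) ℤ_[p]} (hk : Kint m n k) :
    ∃ i g, Kint m n g ∧ rep5 p i * cmap p g = cmap p (k * tZ p) := by
  obtain ⟨hr, h33, h32, h⟩ := Kint_rel hn hk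
  rcases unit_or_dvd (k 2 2 * k 3 3 - k 2 3 * k 3 2) with hD | ⟨d, hd⟩
  · obtain ⟨x, y, z, hx, hy, hz, g, hg, e⟩ := caseA hk hr hD
    refine ⟨Sum.inl (⟨x, hx⟩, ⟨y, hy⟩, ⟨z, hz⟩), g, hg, ?_⟩
    rw [rep_A, ← map_mul, ← e]
  · rcases unit_or_dvd d with hdu | ⟨d', hd'⟩
    · have h12 : IsUnit (k 1 2) := by
        refine h.resolve_left fun h22 => not_dvd_of_unit (h22.mul h33) ?_
        obtain ⟨c, hc⟩ := h32
        exact ⟨d + k 2 3 * c, by linear_combination hd + k 2 3 * hc⟩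
      obtain ⟨x, y, z, w, hx, hy, hz, hw1, hw, g, hg, e⟩ := caseB hk hr h33 h12 h32 d hd hdu
      refine ⟨Sum.inr (Sum.inl (⟨x, hx⟩, ⟨y, hy⟩, ⟨z, hz⟩, ⟨w, hw1, hw⟩)), g, hg, ?_⟩
      rw [rep_B, ← map_mul, ← e]
    · obtain ⟨x, y, hx, hy, g, hg, e⟩ := caseC hk hr h33
        ⟨d', by linear_combination hd + p * hd'⟩
      refine ⟨Sum.inr (Sum.inr (⟨x, hx⟩, ⟨y, hy⟩)), g, hg, ?_⟩
      rw [rep_C, ← map_mul, ← e]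

theorem rep_inj (i j) (k k' : Matrix (Fin 4) (Fin 4) ℤ_[p])
    (h : rep5 p i = rep5 p j * cmap p k) (h' : rep5 p j = rep5 p i * cmap p k') : i = j := by
  rcases i with i | i | i <;> rcases j with j | j | j <;>
    simp only [rep_A, rep_B, rep_C, ← map_mul, cmap_inj.eq_iff] at h h'
  · obtain ⟨i1, i2, i3⟩ := i
    obtain ⟨j1, j2, j3⟩ := j
    obtain ⟨a, b, c⟩ := AZ_inj i1.2 i2.2 i3.2 j1.2 j2.2 j3.2 k h
    rw [Fin.ext a, Fin.ext b, Fin.ext c]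
  · exact (A_ne_B _ h).elim
  · exact (A_ne_C _ h).elim
  · exact (A_ne_B _ h').elim
  · obtain ⟨i1, i2, i3, i4⟩ := i
    obtain ⟨j1, j2, j3, j4⟩ := j
    obtain ⟨a, b, c, d⟩ := BZ_inj i1.2 i2.2 i3.2 i4.2.2 j1.2 j2.2 j3.2 j4.2.2 k h
    rw [Fin.ext a, Fin.ext b, Fin.ext c, Subtype.ext d]
  · exact (B_ne_C _ h).elim
  · exact (A_ne_C _ h').elim
  · exact (B_ne_C _ h').elim
  · obtain ⟨i1, i2⟩ := i
    obtain ⟨j1, j2⟩ := j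
    obtain ⟨a, b⟩ := CZ_inj i1.2 i2.2 j1.2 j2.2 k h
    rw [Fin.ext a, Fin.ext b]

theorem mem_left_coset (m n : ℕ) (r g : Matrix (Fin 4) (Fin 4) ℚ_[p]) :
    g ∈ ({r} : Set (Matrix (Fin 4) (Fin 4) ℚ_[p])) * Kmn1 p m n ↔
      ∃ k, Kint m n k ∧ g = r * cmap p k := by
  rw [Set.singleton_mul]
  constructor
  · rintro ⟨x, hx, rfl⟩
    obtain ⟨h, h1, rfl⟩ := (mem_K_iff m n x).1 hx
    exact ⟨h, h1, rfl⟩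
  · rintro ⟨k, hk, rfl⟩
    exact ⟨_, (mem_K_cmap m n k).2 hk, rfl⟩

end helpers

/-- Double coset decomposition of `K^{(1)}_{m,n} · diag(ℓ²,ℓ²,1,1) · K^{(1)}_{m,n}` into
pairwise distinct left cosets. -/
theorem stmt5 (p : ℕ) [Fact p.Prime] (m n : ℕ) (hn : 1 ≤ n) :
    (Kmn1 p m n *
        {Matrix.diagonal ![(p : ℚ_[p]) ^ 2, (p : ℚ_[p]) ^ 2, 1, 1]} * Kmn1 p m n =
      ⋃ i : (Fin (p ^ 2) × Fin (p ^ 2) × Fin (p ^ 2)) ⊕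
          (Fin p × Fin p × Fin (p ^ 2) × {w : ℕ // 1 ≤ w ∧ w < p}) ⊕
            (Fin (p ^ 2) × Fin (p ^ 2)),
        ({rep5 p i} : Set (Matrix (Fin 4) (Fin 4) ℚ_[p])) * Kmn1 p m n) ∧
    Function.Injective
      (fun i : (Fin (p ^ 2) × Fin (p ^ 2) × Fin (p ^ 2)) ⊕
          (Fin p × Fin p × Fin (p ^ 2) × {w : ℕ // 1 ≤ w ∧ w < p}) ⊕
            (Fin (p ^ 2) × Fin (p ^ 2)) =>
        ({rep5 p i} : Set (Matrix (Fin 4) (Fin 4) ℚ_[p])) * Kmn1 p m n) := by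
  refine ⟨?_, ?_⟩
  · ext g
    simp only [Set.mem_iUnion, mem_left_coset]
    constructor
    · rintro ⟨a, ⟨k, hk, t, ht, rfl⟩, k', hk', rfl⟩
      rw [Set.mem_singleton_iff, ← cmap_t] at ht
      subst ht
      obtain ⟨k, kk, rfl⟩ := (mem_K_iff m n _).1 hk
      obtain ⟨k', kk', rfl⟩ := (mem_K_iff m n _).1 hk'
      obtain ⟨i, g, hg, e⟩ := exists_rep hn kk
      refine ⟨i, g * k', Kint_mul hg kk', ?_⟩
      simp only [map_mul, ← mul_assoc] at e ⊢
      rw [e]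
    · rintro ⟨i, g, hg, rfl⟩
      obtain ⟨k, k', hk, hk', e⟩ := rep_mem (p := p) m n i
      rw [e, ← cmap_t]
      refine Set.mem_mul.2 ⟨cmap p k * cmap p (tZ p), Set.mem_mul.2 ⟨_, (mem_K_cmap m n k).2 hk, _,
        rfl, rfl⟩, cmap p (k' * g), (mem_K_cmap m n _).2 (Kint_mul hk' hg), ?_⟩
      simp only [map_mul, mul_assoc]
  · intro i j hij
    have hmem : ∀ i, rep5 p i ∈ ({rep5 p i} : Set (Matrix (Fin 4) (Fin 4) ℚ_[p])) * Kmn1 p m n :=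
      fun i => (mem_left_coset m n _ _).2 ⟨1, Kint_one m n, by simp⟩
    have h1 := hmem i
    have h2 := hmem j
    dsimp only at hij
    rw [hij] at h1
    rw [← hij] at h2
    obtain ⟨k, -, e⟩ := (mem_left_coset m n _ _).1 h1
    obtain ⟨k', -, e'⟩ := (mem_left_coset m n _ _).1 h2
    exact rep_inj i j k k' e e'
end
end

section
/- Let ℓ be a prime and m ≥ 0, n ≥ 1 integers. In GSp₄(ℚ_ℓ) one has the double coset decomposition K^{(1)}_{m,n} · diag(ℓ³, ℓ², ℓ, 1) · K^{(1)}_{m,n} = ⋃ A(w,x,y,z) · K^{(1)}_{m,n} ∪ ⋃ B(x,y,z) · K^{(1)}_{m,n}, where A(w,x,y,z) has rows (ℓ³, ℓ²x, ℓwx+ℓy, z), (0, ℓ², ℓw, y), (0, 0, ℓ, −x), (0, 0, 0, 1) with the union over 0 ≤ w, x < ℓ, 0 ≤ y < ℓ², 0 ≤ z < ℓ³, and B(x,y,z) has rows (ℓ³, ℓy, ℓ²x, z), (0, ℓ, 0, x), (0, 0, ℓ², −y), (0, 0, 0, 1) with the union over 0 ≤ x < ℓ, 0 ≤ y < ℓ²,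 0 ≤ z < ℓ³; all the listed left cosets are pairwise distinct. -/
open Pointwise

noncomputable section

/-- The coset representatives `A(w,x,y,z)` (for `0 ≤ w,x < ℓ`, `0 ≤ y < ℓ²`,
`0 ≤ z < ℓ³`) and `B(x,y,z)` (for `0 ≤ x < ℓ`, `0 ≤ y < ℓ²`, `0 ≤ z < ℓ³`). -/
def rep6 (p : ℕ) [Fact p.Prime] :
    (Fin p × Fin p × Fin (p ^ 2) × Fin (p ^ 3)) ⊕
      (Fin p × Fin (p ^ 2) × Fin (p ^ 3)) → Matrix (Fin 4) (Fin 4) ℚ_[p] :=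
  Sum.elim
    (fun i => !![(p : ℚ_[p]) ^ 3, (p : ℚ_[p]) ^ 2 * ((i.2.1 : ℕ) : ℚ_[p]),
                   (p : ℚ_[p]) * ((i.1 : ℕ) : ℚ_[p]) * ((i.2.1 : ℕ) : ℚ_[p]) +
                     (p : ℚ_[p]) * ((i.2.2.1 : ℕ) : ℚ_[p]), ((i.2.2.2 : ℕ) : ℚ_[p]);
                 0, (p : ℚ_[p]) ^ 2, (p : ℚ_[p]) * ((i.1 : ℕ) : ℚ_[p]),
                   ((i.2.2.1 : ℕ) : ℚ_[p]);
                 0, 0, (p : ℚ_[p]), -((i.2.1 : ℕ) : ℚ_[p]);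
                 0, 0, 0, 1])
    (fun i => !![(p : ℚ_[p]) ^ 3, (p : ℚ_[p]) * ((i.2.1 : ℕ) : ℚ_[p]),
                   (p : ℚ_[p]) ^ 2 * ((i.1 : ℕ) : ℚ_[p]), ((i.2.2 : ℕ) : ℚ_[p]);
                 0, (p : ℚ_[p]), 0, ((i.1 : ℕ) : ℚ_[p]);
                 0, 0, (p : ℚ_[p]) ^ 2, -((i.2.1 : ℕ) : ℚ_[p]);
                 0, 0, 0, 1])


namespace Stmt6Aux
open Matrix

abbrev M4 (R : Type) := Matrix (Fin 4) (Fin 4) R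

def JZ (R : Type) [CommRing R] : M4 R :=
  !![0, 0, 0, 1; 0, 0, 1, 0; 0, -1, 0, 0; -1, 0, 0, 0]

def KZ (p : ℕ) [Fact p.Prime] (m n : ℕ) : Set (M4 ℤ_[p]) :=
  {g | IsUnit g.det ∧
    (∃ μ : ℤ_[p], IsUnit μ ∧ (p : ℤ_[p]) ^ m ∣ μ - 1 ∧ gᵀ * JZ ℤ_[p] * g = μ • JZ ℤ_[p]) ∧
    (p : ℤ_[p]) ^ n ∣ g 1 0 ∧ (p : ℤ_[p]) ^ n ∣ g 2 0 ∧ (p : ℤ_[p]) ^ n ∣ g 3 0 ∧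
    (p : ℤ_[p]) ^ n ∣ g 3 1 ∧ (p : ℤ_[p]) ^ n ∣ g 3 2}

def toQ (p : ℕ) [Fact p.Prime] : M4 ℤ_[p] →+* M4 ℚ_[p] :=
  (PadicInt.Coe.ringHom (p := p)).mapMatrix

lemma toQ_apply (p : ℕ) [Fact p.Prime] (g : M4 ℤ_[p]) (i j) : toQ p g i j = (g i j : ℚ_[p]) := rfl

lemma toQ_inj (p : ℕ) [Fact p.Prime] : Function.Injective (toQ p) := by
  intro a b h
  ext i j
  have := congrFun (congrFun h i) j
  exact Subtype.ext this

lemma toQ_J (p : ℕ) [Fact p.Prime] : toQ p (JZ ℤ_[p]) = Jmat p := by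
  ext i j
  rw [toQ_apply]
  fin_cases i <;> fin_cases j <;> simp [JZ, Jmat]

lemma dvd_iff (p : ℕ) [Fact p.Prime] (x : ℤ_[p]) (n : ℕ) :
    ‖(x : ℚ_[p])‖ ≤ (p : ℝ) ^ (-(n : ℤ)) ↔ (p : ℤ_[p]) ^ n ∣ x := by
  rw [← PadicInt.norm_def, PadicInt.norm_le_pow_iff_mem_span_pow, Ideal.mem_span_singleton]

lemma toQ_transpose (p : ℕ) [Fact p.Prime] (g : M4 ℤ_[p]) : (toQ p g)ᵀ = toQ p gᵀ := rfl

lemma toQ_smul (p : ℕ) [Fact p.Prime] (c : ℤ_[p]) (g : M4 ℤ_[p]) :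
    toQ p (c • g) = (c : ℚ_[p]) • toQ p g := by
  ext i j
  simp [toQ_apply]

lemma toQ_det (p : ℕ) [Fact p.Prime] (g : M4 ℤ_[p]) :
    (toQ p g).det = ((g.det : ℤ_[p]) : ℚ_[p]) :=
  ((PadicInt.Coe.ringHom (p := p)).map_det g).symm

lemma K_iff (p : ℕ) [Fact p.Prime] (m n : ℕ) (G : M4 ℤ_[p]) :
    toQ p G ∈ Kmn1 p m n ↔ G ∈ KZ p m n := by
  unfold Kmn1 KZ
  simp only [Set.mem_setOf_eq, toQ_apply, dvd_iff, toQ_det]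
  constructor
  · rintro ⟨-, hd, ⟨μ, h1, h2, h3⟩, hr⟩
    refine ⟨PadicInt.isUnit_iff.2 (by simpa using hd), ?_, hr⟩
    obtain ⟨μ, rfl⟩ : ∃ ν : ℤ_[p], (ν : ℚ_[p]) = μ := ⟨⟨μ, h1.le⟩, rfl⟩
    refine ⟨μ, PadicInt.isUnit_iff.2 (by simpa using h1), ?_, ?_⟩
    · rw [← dvd_iff]; simpa using h2
    · apply toQ_inj p
      rw [toQ_smul, toQ_J, map_mul, map_mul, toQ_J, ← toQ_transpose, h3]
  · rintro ⟨hd, ⟨μ, h1, h2, h3⟩, hr⟩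
    refine ⟨fun i j => PadicInt.norm_le_one _, by simpa using PadicInt.isUnit_iff.1 hd, ?_, hr⟩
    refine ⟨μ, by simpa using PadicInt.isUnit_iff.1 h1, ?_, ?_⟩
    · rw [← dvd_iff] at h2; simpa using h2
    · rw [← toQ_J, ← toQ_smul, ← h3, map_mul, map_mul, toQ_transpose]

lemma K_lift (p : ℕ) [Fact p.Prime] (m n : ℕ) (g : M4 ℚ_[p]) (hg : g ∈ Kmn1 p m n) :
    ∃ G ∈ KZ p m n, toQ p G = g := by
  have : toQ p (Matrix.of fun i j => (⟨g i j, hg.1 i j⟩ : ℤ_[p])) = g := by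
    ext i j; rfl
  exact ⟨_, (K_iff p m n _).1 (by rw [this]; exact hg), this⟩

lemma KZ_mul (p : ℕ) [Fact p.Prime] (m n : ℕ) {g h : M4 ℤ_[p]} (hg : g ∈ KZ p m n)
    (hh : h ∈ KZ p m n) : g * h ∈ KZ p m n := by
  obtain ⟨d, ⟨μ, u, c, e⟩, a1, a2, a3, a4, a5⟩ := hg
  obtain ⟨d', ⟨μ', u', c', e'⟩, b1, b2, b3, b4, b5⟩ := hh
  refine ⟨by rw [det_mul]; exact d.mul d', ⟨μ * μ', u.mul u', ?_, ?_⟩, ?_, ?_, ?_, ?_, ?_⟩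
  · have : μ * μ' - 1 = μ * (μ' - 1) + (μ - 1) := by ring
    rw [this]
    exact dvd_add (Dvd.dvd.mul_left c' _) c
  · calc (g * h)ᵀ * JZ ℤ_[p] * (g * h) = hᵀ * (gᵀ * JZ ℤ_[p] * g) * h := by
          rw [transpose_mul]; simp only [Matrix.mul_assoc]
      _ = _ := by rw [e, Matrix.mul_smul, Matrix.smul_mul, e', smul_smul]
  all_goals
    rw [Matrix.mul_apply, Fin.sum_univ_four]
    refine dvd_add (dvd_add (dvd_add ?_ ?_) ?_) ?_ <;>
    first
    | exact Dvd.dvd.mul_left (by assumption) _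
    | exact Dvd.dvd.mul_right (by assumption) _

def ind (p : ℕ) := (Fin p × Fin p × Fin (p ^ 2) × Fin (p ^ 3)) ⊕
      (Fin p × Fin (p ^ 2) × Fin (p ^ 3))

section mats
variable {R : Type} [CommRing R]

def dd (p : R) : M4 R := !![p ^ 3, 0, 0, 0; 0, p ^ 2, 0, 0; 0, 0, p, 0; 0, 0, 0, 1]
def dd' (p : R) : M4 R := !![p ^ 3, 0, 0, 0; 0, p, 0, 0; 0, 0, p ^ 2, 0; 0, 0, 0, 1]
def uu (w x y z : R) : M4 R := !![1, x, w * x + y, z; 0, 1, w, y; 0, 0, 1, -x; 0, 0, 0, 1]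
def ui (w x y z : R) : M4 R :=
  !![1, -x, -y, -z; 0, 1, -w, -y - w * x; 0, 0, 1, x; 0, 0, 0, 1]
def vv (x y z : R) : M4 R := !![1, y, x, z; 0, 1, 0, x; 0, 0, 1, -y; 0, 0, 0, 1]
def vi (x y z : R) : M4 R := !![1, -y, -x, -z; 0, 1, 0, -x; 0, 0, 1, y; 0, 0, 0, 1]
def ss (R : Type) [CommRing R] : M4 R := !![1, 0, 0, 0; 0, 0, 1, 0; 0, -1, 0, 0; 0, 0, 0, 1]
def si (R : Type) [CommRing R] : M4 R := !![1, 0, 0, 0; 0, 0, -1, 0; 0, 1, 0, 0; 0, 0, 0, 1]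
def repA (p w x y z : R) : M4 R :=
  !![p ^ 3, p ^ 2 * x, p * w * x + p * y, z; 0, p ^ 2, p * w, y; 0, 0, p, -x; 0, 0, 0, 1]
def repB (p x y z : R) : M4 R :=
  !![p ^ 3, p * y, p ^ 2 * x, z; 0, p, 0, x; 0, 0, p ^ 2, -y; 0, 0, 0, 1]

lemma uu_dd (p w x y z : R) : uu w x y z * dd p = repA p w x y z := by
  ext i j
  fin_cases i <;> fin_cases j <;>
    simp [uu, dd, repA, Matrix.mul_apply, Fin.sum_univ_four] <;> ring

lemma vv_dd (p x y z : R) : vv x y z * dd' p = repB p x y z := by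
  ext i j
  fin_cases i <;> fin_cases j <;>
    simp [vv, dd', repB, Matrix.mul_apply, Fin.sum_univ_four] <;> ring

lemma uu_ui (w x y z : R) : uu w x y z * ui w x y z = 1 := by
  ext i j
  fin_cases i <;> fin_cases j <;>
    simp [uu, ui, Matrix.mul_apply, Fin.sum_univ_four] <;> ring

lemma vv_vi (x y z : R) : vv x y z * vi x y z = 1 := by
  ext i j
  fin_cases i <;> fin_cases j <;>
    simp [vv, vi, Matrix.mul_apply, Fin.sum_univ_four] <;> ring

lemma ss_dd (p : R) : ss R * dd p * si R = dd' p := by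
  ext i j
  fin_cases i <;> fin_cases j <;>
    simp [ss, si, dd, dd', Matrix.mul_apply, Fin.sum_univ_four]

lemma dd_J (p : R) : (dd p)ᵀ * JZ R * dd p = p ^ 3 • JZ R := by
  ext i j
  fin_cases i <;> fin_cases j <;>
    simp [dd, JZ, Matrix.mul_apply, Fin.sum_univ_four] <;> ring

lemma dd'_J (p : R) : (dd' p)ᵀ * JZ R * dd' p = p ^ 3 • JZ R := by
  ext i j
  fin_cases i <;> fin_cases j <;>
    simp [dd', JZ, Matrix.mul_apply, Fin.sum_univ_four] <;> ring

lemma dd_det (p : R) : (dd p).det = p ^ 6 := by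
  simp [dd, Matrix.det_succ_row_zero, Fin.sum_univ_succ]; ring

lemma dd'_det (p : R) : (dd' p).det = p ^ 6 := by
  simp [dd', Matrix.det_succ_row_zero, Fin.sum_univ_succ]; ring

end mats

lemma mem_of (p : ℕ) [Fact p.Prime] (m n : ℕ) (g : M4 ℤ_[p]) (hd : g.det = 1)
    (hJ : gᵀ * JZ ℤ_[p] * g = JZ ℤ_[p])
    (h1 : g 1 0 = 0) (h2 : g 2 0 = 0) (h3 : g 3 0 = 0) (h4 : g 3 1 = 0) (h5 : g 3 2 = 0) :
    g ∈ KZ p m n :=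
  ⟨by simp [hd], ⟨1, isUnit_one, by simp, by simp [hJ]⟩, by simp [h1], by simp [h2],
    by simp [h3], by simp [h4], by simp [h5]⟩

lemma uu_mem (p : ℕ) [Fact p.Prime] (m n : ℕ) (w x y z : ℤ_[p]) : uu w x y z ∈ KZ p m n := by
  apply mem_of
  · simp [uu, Matrix.det_succ_row_zero, Fin.sum_univ_succ]
  · ext i j
    fin_cases i <;> fin_cases j <;>
      simp [uu, JZ, Matrix.mul_apply, Fin.sum_univ_four] <;> ring
  all_goals simp [uu]

lemma ui_mem (p : ℕ) [Fact p.Prime] (m n : ℕ) (w x y z : ℤ_[p]) : ui w x y z ∈ KZ p m n := by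
  apply mem_of
  · simp [ui, Matrix.det_succ_row_zero, Fin.sum_univ_succ]
  · ext i j
    fin_cases i <;> fin_cases j <;>
      simp [ui, JZ, Matrix.mul_apply, Fin.sum_univ_four] <;> ring
  all_goals simp [ui]

lemma vv_mem (p : ℕ) [Fact p.Prime] (m n : ℕ) (x y z : ℤ_[p]) : vv x y z ∈ KZ p m n := by
  apply mem_of
  · simp [vv, Matrix.det_succ_row_zero, Fin.sum_univ_succ]
  · ext i j
    fin_cases i <;> fin_cases j <;>
      simp [vv, JZ, Matrix.mul_apply, Fin.sum_univ_four] <;> ring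
  all_goals simp [vv]

lemma vi_mem (p : ℕ) [Fact p.Prime] (m n : ℕ) (x y z : ℤ_[p]) : vi x y z ∈ KZ p m n := by
  apply mem_of
  · simp [vi, Matrix.det_succ_row_zero, Fin.sum_univ_succ]
  · ext i j
    fin_cases i <;> fin_cases j <;>
      simp [vi, JZ, Matrix.mul_apply, Fin.sum_univ_four] <;> ring
  all_goals simp [vi]

lemma ss_mem (p : ℕ) [Fact p.Prime] (m n : ℕ) : ss ℤ_[p] ∈ KZ p m n := by
  apply mem_of
  · simp [ss, Matrix.det_succ_row_zero, Fin.sum_univ_succ]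
  · ext i j
    fin_cases i <;> fin_cases j <;>
      simp [ss, JZ, Matrix.mul_apply, Fin.sum_univ_four]
  all_goals simp [ss]

lemma si_mem (p : ℕ) [Fact p.Prime] (m n : ℕ) : si ℤ_[p] ∈ KZ p m n := by
  apply mem_of
  · simp [si, Matrix.det_succ_row_zero, Fin.sum_univ_succ]
  · ext i j
    fin_cases i <;> fin_cases j <;>
      simp [si, JZ, Matrix.mul_apply, Fin.sum_univ_four]
  all_goals simp [si]

lemma one_mem (p : ℕ) [Fact p.Prime] (m n : ℕ) : (1 : M4 ℤ_[p]) ∈ KZ p m n := by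
  apply mem_of <;> simp

/-- transfer of the similitude condition -/
lemma transfer (p : ℕ) [Fact p.Prime] (m : ℕ) (D D' h k : M4 ℤ_[p])
    (e : D * k = h * D')
    (hD : Dᵀ * JZ ℤ_[p] * D = (p : ℤ_[p]) ^ 3 • JZ ℤ_[p])
    (hD' : D'ᵀ * JZ ℤ_[p] * D' = (p : ℤ_[p]) ^ 3 • JZ ℤ_[p])
    (dD : D.det = (p : ℤ_[p]) ^ 6) (dD' : D'.det = (p : ℤ_[p]) ^ 6)
    (hd : IsUnit h.det)
    (hs : ∃ μ : ℤ_[p], IsUnit μ ∧ (p : ℤ_[p]) ^ m ∣ μ - 1 ∧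
      hᵀ * JZ ℤ_[p] * h = μ • JZ ℤ_[p]) :
    IsUnit k.det ∧ ∃ μ : ℤ_[p], IsUnit μ ∧ (p : ℤ_[p]) ^ m ∣ μ - 1 ∧
      kᵀ * JZ ℤ_[p] * k = μ • JZ ℤ_[p] := by
  have hp : (p : ℤ_[p]) ≠ 0 := by exact_mod_cast (Fact.out : p.Prime).ne_zero
  constructor
  · have := congrArg Matrix.det e
    rw [det_mul, det_mul, dD, dD', mul_comm] at this
    rw [mul_right_cancel₀ (pow_ne_zero 6 hp) this]
    exact hd
  · obtain ⟨μ, h1, h2, h3⟩ := hs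
    refine ⟨μ, h1, h2, ?_⟩
    have key : (p : ℤ_[p]) ^ 3 • (kᵀ * JZ ℤ_[p] * k) = (p : ℤ_[p]) ^ 3 • (μ • JZ ℤ_[p]) := by
      calc (p : ℤ_[p]) ^ 3 • (kᵀ * JZ ℤ_[p] * k)
          = kᵀ * (Dᵀ * JZ ℤ_[p] * D) * k := by
            rw [hD, Matrix.mul_smul, Matrix.smul_mul]
        _ = (D * k)ᵀ * JZ ℤ_[p] * (D * k) := by
            rw [transpose_mul]; simp only [Matrix.mul_assoc]
        _ = D'ᵀ * (hᵀ * JZ ℤ_[p] * h) * D' := by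
            rw [e, transpose_mul]; simp only [Matrix.mul_assoc]
        _ = _ := by
            rw [h3, Matrix.mul_smul, Matrix.smul_mul, hD', smul_comm]
    ext i j
    have := congrFun (congrFun key i) j
    simp only [Matrix.smul_apply, smul_eq_mul] at this ⊢
    exact mul_left_cancel₀ (pow_ne_zero 3 hp) this

lemma choice (p : ℕ) [Fact p.Prime] (N : ℕ) (a b : ℤ_[p]) (ha : IsUnit a) :
    ∃ t : Fin (p ^ N), (p : ℤ_[p]) ^ N ∣ b - ((t : ℕ) : ℤ_[p]) * a := by
  obtain ⟨u, rfl⟩ := ha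
  refine ⟨⟨_, PadicInt.appr_lt (b * (↑u⁻¹ : ℤ_[p])) N⟩, ?_⟩
  have := PadicInt.appr_spec N (b * (↑u⁻¹ : ℤ_[p]))
  rw [Ideal.mem_span_singleton] at this
  have h2 := Dvd.dvd.mul_right this (u : ℤ_[p])
  rw [sub_mul, mul_assoc, Units.inv_mul, mul_one] at h2
  exact h2

lemma choice1 (p : ℕ) [Fact p.Prime] (a b : ℤ_[p]) (ha : IsUnit a) :
    ∃ t : Fin p, (p : ℤ_[p]) ∣ b - ((t : ℕ) : ℤ_[p]) * a := by
  obtain ⟨t, ht⟩ := choice p 1 a b ha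
  exact ⟨⟨t, by simpa using t.2⟩, by simpa using ht⟩

lemma nonunit_iff (p : ℕ) [Fact p.Prime] (a : ℤ_[p]) : ¬ IsUnit a ↔ (p : ℤ_[p]) ∣ a := by
  rw [← PadicInt.norm_lt_one_iff_dvd, ← PadicInt.mem_nonunits, mem_nonunits_iff]

/-- the two symplectic relations used, plus units -/
lemma rels (p : ℕ) [Fact p.Prime] (m n : ℕ) (hn : 1 ≤ n) (h : M4 ℤ_[p]) (hh : h ∈ KZ p m n) :
    h 0 1 * h 3 3 + h 1 1 * h 2 3 - h 2 1 * h 1 3 - h 3 1 * h 0 3 = 0 ∧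
    h 0 2 * h 3 3 + h 1 2 * h 2 3 - h 2 2 * h 1 3 - h 3 2 * h 0 3 = 0 ∧
    IsUnit (h 3 3) := by
  obtain ⟨d, ⟨μ, u, c, e⟩, a1, a2, a3, a4, a5⟩ := hh
  have e1 := congrFun (congrFun e 1) 3
  have e2 := congrFun (congrFun e 2) 3
  have e3 := congrFun (congrFun e 0) 3
  simp [JZ, Matrix.mul_apply, Fin.sum_univ_four] at e1 e2 e3
  refine ⟨by linear_combination e1, by linear_combination e2, ?_⟩
  by_contra hc
  rw [nonunit_iff] at hc
  have hpn : (p : ℤ_[p]) ∣ (p : ℤ_[p]) ^ n := dvd_pow_self _ (by omega)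
  refine (nonunit_iff p μ).2 ?_ u
  rw [← e3]
  obtain ⟨t1, h1⟩ := hpn.trans a1
  obtain ⟨t2, h2⟩ := hpn.trans a2
  obtain ⟨t3, h3⟩ := hpn.trans a3
  obtain ⟨t4, h4⟩ := hc
  rw [h1, h2, h3, h4]
  refine ⟨-(t3 * h 0 3) - t2 * h 1 3 + t1 * h 2 3 + h 0 0 * t4, by ring⟩

lemma unit_cancel (p : ℕ) [Fact p.Prime] {q a b : ℤ_[p]} (hb : IsUnit b) (h : q ∣ a * b) :
    q ∣ a := (IsUnit.dvd_mul_right hb).1 h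

lemma caseA (p : ℕ) [Fact p.Prime] (m n : ℕ) (hn : 1 ≤ n) (k : M4 ℤ_[p]) (hk : k ∈ KZ p m n)
    (hu : IsUnit (k 2 2)) :
    ∃ (w x : Fin p) (y : Fin (p ^ 2)) (z : Fin (p ^ 3)), ∃ k' ∈ KZ p m n,
      k * dd (p : ℤ_[p]) = repA (p : ℤ_[p]) (w : ℕ) (x : ℕ) (y : ℕ) (z : ℕ) * k' := by
  have hpn : (p : ℤ_[p]) ∣ (p : ℤ_[p]) ^ n := dvd_pow_self _ (by omega)
  have u3 := (rels p m n hn k hk).2.2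
  obtain ⟨x, hx⟩ := choice1 p (k 3 3) (-k 2 3) u3
  obtain ⟨w, hw⟩ := choice1 p (k 2 2) (k 1 2) hu
  obtain ⟨y, hy⟩ := choice p 2 (k 3 3) (k 1 3 - (w : ℕ) * k 2 3 - (w : ℕ) * (x : ℕ) * k 3 3) u3
  obtain ⟨z, hz⟩ := choice p 3 (k 3 3) (k 0 3 - (x : ℕ) * k 1 3 - (y : ℕ) * k 2 3) u3
  refine ⟨w, x, y, z, ?_⟩
  generalize ((w : ℕ) : ℤ_[p]) = w at *
  generalize ((x : ℕ) : ℤ_[p]) = x at *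
  generalize ((y : ℕ) : ℤ_[p]) = y at *
  generalize ((z : ℕ) : ℤ_[p]) = z at *
  obtain ⟨h, hdef⟩ : ∃ h, h = ui w x y z * k := ⟨_, rfl⟩
  have hh : h ∈ KZ p m n := hdef ▸ KZ_mul p m n (ui_mem p m n w x y z) hk
  have kh : k = uu w x y z * h := by rw [hdef, ← Matrix.mul_assoc, uu_ui, Matrix.one_mul]
  obtain ⟨r1, r2, hu3⟩ := rels p m n hn h hh
  obtain ⟨q, hq⟩ : (p : ℤ_[p]) ∣ h 2 3 := by
    have : h 2 3 = -(-k 2 3 - x * k 3 3) := by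
      rw [hdef, Matrix.mul_apply, Fin.sum_univ_four]; simp [ui]; ring
    rw [this]; exact (dvd_neg).2 hx
  obtain ⟨e, he⟩ : (p : ℤ_[p]) ∣ h 1 2 := by
    have : h 1 2 = (k 1 2 - w * k 2 2) + (-y - w * x) * k 3 2 := by
      rw [hdef, Matrix.mul_apply, Fin.sum_univ_four]; simp [ui]; ring
    rw [this]; exact dvd_add hw (Dvd.dvd.mul_left (hpn.trans hk.2.2.2.2.2.2) _)
  obtain ⟨f, hf⟩ : (p : ℤ_[p]) ^ 2 ∣ h 1 3 := by
    have : h 1 3 = k 1 3 - w * k 2 3 - w * x * k 3 3 - y * k 3 3 := by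
      rw [hdef, Matrix.mul_apply, Fin.sum_univ_four]; simp [ui]; ring
    rw [this]; exact hy
  obtain ⟨c, hc⟩ : (p : ℤ_[p]) ^ 3 ∣ h 0 3 := by
    have : h 0 3 = k 0 3 - x * k 1 3 - y * k 2 3 - z * k 3 3 := by
      rw [hdef, Matrix.mul_apply, Fin.sum_univ_four]; simp [ui]; ring
    rw [this]; exact hz
  obtain ⟨a, ha⟩ : (p : ℤ_[p]) ∣ h 0 1 := by
    apply unit_cancel p hu3
    refine ⟨-h 1 1 * q + h 2 1 * p * f + h 3 1 * p ^ 2 * c, ?_⟩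
    rw [hq, hf, hc] at r1
    linear_combination r1
  obtain ⟨b, hb⟩ : (p : ℤ_[p]) ^ 2 ∣ h 0 2 := by
    apply unit_cancel p hu3
    refine ⟨-e * q + h 2 2 * f + h 3 2 * p * c, ?_⟩
    rw [hq, hf, hc, he] at r2
    linear_combination r2
  let k' : M4 ℤ_[p] := !![h 0 0, a, b, c; p * h 1 0, h 1 1, e, f;
    p ^ 2 * h 2 0, p * h 2 1, h 2 2, q; p ^ 3 * h 3 0, p ^ 2 * h 3 1, p * h 3 2, h 3 3]
  have hE : dd (p : ℤ_[p]) * k' = h * dd (p : ℤ_[p]) := by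
    ext i j
    fin_cases i <;> fin_cases j <;>
      simp only [Matrix.mul_apply, Fin.sum_univ_four] <;>
      simp [k', dd, Matrix.mul_apply, Fin.sum_univ_four, ha, hb, hc, he, hf, hq] <;> ring
  refine ⟨k', ?_, ?_⟩
  · obtain ⟨t1, t2⟩ := transfer p m _ _ h k' hE (dd_J _) (dd_J _) (dd_det _) (dd_det _) hh.1 hh.2.1
    obtain ⟨-, -, b1, b2, b3, b4, b5⟩ := hh
    exact ⟨t1, t2, Dvd.dvd.mul_left b1 _, Dvd.dvd.mul_left b2 _, Dvd.dvd.mul_left b3 _,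
      Dvd.dvd.mul_left b4 _, Dvd.dvd.mul_left b5 _⟩
  · rw [← uu_dd, Matrix.mul_assoc, hE, ← Matrix.mul_assoc, ← kh]

lemma caseB (p : ℕ) [Fact p.Prime] (m n : ℕ) (hn : 1 ≤ n) (k : M4 ℤ_[p]) (hk : k ∈ KZ p m n)
    (hu : ¬ IsUnit (k 2 2)) :
    ∃ (x : Fin p) (y : Fin (p ^ 2)) (z : Fin (p ^ 3)), ∃ k' ∈ KZ p m n,
      k * dd (p : ℤ_[p]) = repB (p : ℤ_[p]) (x : ℕ) (y : ℕ) (z : ℕ) * k' := by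
  have hpn : (p : ℤ_[p]) ∣ (p : ℤ_[p]) ^ n := dvd_pow_self _ (by omega)
  have u3 := (rels p m n hn k hk).2.2
  rw [nonunit_iff] at hu
  obtain ⟨x, hx⟩ := choice1 p (k 3 3) (k 1 3) u3
  obtain ⟨y, hy⟩ := choice p 2 (k 3 3) (-k 2 3) u3
  obtain ⟨z, hz⟩ := choice p 3 (k 3 3) (k 0 3 - (y : ℕ) * k 1 3 - (x : ℕ) * k 2 3) u3
  refine ⟨x, y, z, ?_⟩
  generalize ((x : ℕ) : ℤ_[p]) = x at *
  generalize ((y : ℕ) : ℤ_[p]) = y at *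
  generalize ((z : ℕ) : ℤ_[p]) = z at *
  obtain ⟨h, hdef⟩ : ∃ h, h = vi x y z * k := ⟨_, rfl⟩
  have hh : h ∈ KZ p m n := hdef ▸ KZ_mul p m n (vi_mem p m n x y z) hk
  have kh : k = vv x y z * h := by rw [hdef, ← Matrix.mul_assoc, vv_vi, Matrix.one_mul]
  obtain ⟨r1, r2, hu3⟩ := rels p m n hn h hh
  obtain ⟨q, hq⟩ : (p : ℤ_[p]) ^ 2 ∣ h 2 3 := by
    have : h 2 3 = -(-k 2 3 - y * k 3 3) := by
      rw [hdef, Matrix.mul_apply, Fin.sum_univ_four]; simp [vi]; ring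
    rw [this]; exact (dvd_neg).2 hy
  obtain ⟨e, he⟩ : (p : ℤ_[p]) ∣ h 2 2 := by
    have : h 2 2 = k 2 2 + y * k 3 2 := by
      rw [hdef, Matrix.mul_apply, Fin.sum_univ_four]; simp [vi]
    rw [this]; exact dvd_add hu (Dvd.dvd.mul_left (hpn.trans hk.2.2.2.2.2.2) _)
  obtain ⟨f, hf⟩ : (p : ℤ_[p]) ∣ h 1 3 := by
    have : h 1 3 = k 1 3 - x * k 3 3 := by
      rw [hdef, Matrix.mul_apply, Fin.sum_univ_four]; simp [vi]; ring
    rw [this]; exact hx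
  obtain ⟨c, hc⟩ : (p : ℤ_[p]) ^ 3 ∣ h 0 3 := by
    have : h 0 3 = k 0 3 - y * k 1 3 - x * k 2 3 - z * k 3 3 := by
      rw [hdef, Matrix.mul_apply, Fin.sum_univ_four]; simp [vi]; ring
    rw [this]; exact hz
  obtain ⟨a, ha⟩ : (p : ℤ_[p]) ∣ h 0 1 := by
    apply unit_cancel p hu3
    refine ⟨-h 1 1 * p * q + h 2 1 * f + h 3 1 * p ^ 2 * c, ?_⟩
    rw [hq, hf, hc] at r1
    linear_combination r1
  obtain ⟨b, hb⟩ : (p : ℤ_[p]) ^ 2 ∣ h 0 2 := by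
    apply unit_cancel p hu3
    refine ⟨-h 1 2 * q + e * f + h 3 2 * p * c, ?_⟩
    rw [hq, hf, hc, he] at r2
    linear_combination r2
  let k' : M4 ℤ_[p] := !![h 0 0, a, b, c; p ^ 2 * h 1 0, p * h 1 1, h 1 2, f;
    p * h 2 0, h 2 1, e, q; p ^ 3 * h 3 0, p ^ 2 * h 3 1, p * h 3 2, h 3 3]
  have hE : dd' (p : ℤ_[p]) * k' = h * dd (p : ℤ_[p]) := by
    ext i j
    fin_cases i <;> fin_cases j <;>
      simp only [Matrix.mul_apply, Fin.sum_univ_four] <;>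
      simp [k', dd, dd', Matrix.mul_apply, Fin.sum_univ_four, ha, hb, hc, he, hf, hq] <;> ring
  refine ⟨k', ?_, ?_⟩
  · obtain ⟨t1, t2⟩ := transfer p m _ _ h k' hE (dd'_J _) (dd_J _) (dd'_det _) (dd_det _)
      hh.1 hh.2.1
    obtain ⟨-, -, b1, b2, b3, b4, b5⟩ := hh
    exact ⟨t1, t2, Dvd.dvd.mul_left b1 _, Dvd.dvd.mul_left b2 _, Dvd.dvd.mul_left b3 _,
      Dvd.dvd.mul_left b4 _, Dvd.dvd.mul_left b5 _⟩
  · rw [← vv_dd, Matrix.mul_assoc, hE, ← Matrix.mul_assoc, ← kh]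

lemma fin_eq (p : ℕ) [Fact p.Prime] (N : ℕ) (a b : ℕ) (ha : a < p ^ N) (hb : b < p ^ N)
    (t : ℤ_[p]) (h : (p : ℤ_[p]) ^ N * t = (b : ℤ_[p]) - (a : ℤ_[p])) : a = b := by
  have h1 : (p : ℤ_[p]) ^ N ∣ (((b : ℤ) - a : ℤ) : ℤ_[p]) := ⟨t, by push_cast; exact h.symm⟩
  rw [PadicInt.pow_p_dvd_int_iff] at h1
  have h2 : a ≡ b [MOD p ^ N] := (Nat.modEq_iff_dvd).2 (by exact_mod_cast h1)
  exact Nat.ModEq.eq_of_lt_of_lt h2 ha hb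

def repZ (p : ℕ) [Fact p.Prime] :
    (Fin p × Fin p × Fin (p ^ 2) × Fin (p ^ 3)) ⊕
      (Fin p × Fin (p ^ 2) × Fin (p ^ 3)) → M4 ℤ_[p] :=
  Sum.elim (fun i => repA (p : ℤ_[p]) (i.1 : ℕ) (i.2.1 : ℕ) (i.2.2.1 : ℕ) (i.2.2.2 : ℕ))
    (fun i => repB (p : ℤ_[p]) (i.1 : ℕ) (i.2.1 : ℕ) (i.2.2 : ℕ))

lemma rep_toQ (p : ℕ) [Fact p.Prime] (i) : toQ p (repZ p i) = rep6 p i := by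
  rcases i with i | i
  all_goals
    ext a b
    rw [toQ_apply]
    fin_cases a <;> fin_cases b <;> simp [repZ, rep6, repA, repB]

lemma dd_toQ (p : ℕ) [Fact p.Prime] : toQ p (dd (p : ℤ_[p])) =
    Matrix.diagonal ![(p : ℚ_[p]) ^ 3, (p : ℚ_[p]) ^ 2, (p : ℚ_[p]), 1] := by
  ext a b
  rw [toQ_apply]
  fin_cases a <;> fin_cases b <;> simp [dd, Matrix.diagonal]

lemma rep_inj (p : ℕ) [Fact p.Prime] (i j) (k k' : M4 ℤ_[p]) (h : repZ p i * k = repZ p j)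
    (h' : repZ p j * k' = repZ p i) : i = j := by
  have hp : (p : ℤ_[p]) ≠ 0 := by exact_mod_cast (Fact.out : p.Prime).ne_zero
  have hpu : ¬ IsUnit (p : ℤ_[p]) := (nonunit_iff p _).2 dvd_rfl
  have AB : ∀ (w x y z x' y' z' : ℤ_[p]) (k : M4 ℤ_[p]),
      repA (p : ℤ_[p]) w x y z * k = repB (p : ℤ_[p]) x' y' z' → False := by
    intro w x y z x' y' z' k e
    have e31 := congrFun (congrFun e 3) 1
    have e21 := congrFun (congrFun e 2) 1
    have e11 := congrFun (congrFun e 1) 1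
    simp only [Matrix.mul_apply, Fin.sum_univ_four] at e31 e21 e11
    simp [repA, repB] at e31 e21 e11
    have k21 : k 2 1 = 0 := by simpa [e31, hp] using e21
    rw [e31, k21] at e11
    apply hpu
    refine IsUnit.of_mul_eq_one (k 1 1) (mul_left_cancel₀ hp ?_)
    linear_combination e11
  rcases i with ⟨w, x, y, z⟩ | ⟨x, y, z⟩ <;> rcases j with ⟨w', x', y', z'⟩ | ⟨x', y', z'⟩
  · have e32 := congrFun (congrFun h 3) 2
    have e33 := congrFun (congrFun h 3) 3
    have e22 := congrFun (congrFun h 2) 2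
    have e23 := congrFun (congrFun h 2) 3
    have e12 := congrFun (congrFun h 1) 2
    have e13 := congrFun (congrFun h 1) 3
    have e03 := congrFun (congrFun h 0) 3
    simp only [Matrix.mul_apply, Fin.sum_univ_four] at e32 e33 e22 e23 e12 e13 e03
    simp [repZ, repA] at e32 e33 e22 e23 e12 e13 e03
    rw [e33] at e03 e13 e23
    rw [e32] at e12 e22
    have hx : (x : ℕ) = x' := by
      refine fin_eq p 1 _ _ (by simpa using x.2) (by simpa using x'.2) (-k 2 3) ?_
      linear_combination -e23
    obtain rfl : x = x' := Fin.ext hx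
    have k23 : k 2 3 = 0 := by
      apply mul_left_cancel₀ hp; linear_combination e23
    have k22 : k 2 2 = 1 := by
      apply mul_left_cancel₀ hp; linear_combination e22
    rw [k23] at e13 e03
    rw [k22] at e12
    have hw : (w : ℕ) = w' := by
      refine fin_eq p 1 _ _ (by simpa using w.2) (by simpa using w'.2) (k 1 2) ?_
      apply mul_left_cancel₀ hp
      linear_combination e12
    obtain rfl : w = w' := Fin.ext hw
    have hy : (y : ℕ) = y' := by
      refine fin_eq p 2 _ _ y.2 y'.2 (k 1 3) ?_
      linear_combination e13
    obtain rfl : y = y' := Fin.ext hy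
    have k13 : k 1 3 = 0 := by
      apply mul_left_cancel₀ (pow_ne_zero 2 hp); linear_combination e13
    rw [k13] at e03
    have hz : (z : ℕ) = z' := by
      refine fin_eq p 3 _ _ z.2 z'.2 (k 0 3) ?_
      linear_combination e03
    obtain rfl : z = z' := Fin.ext hz
    rfl
  · exact (AB _ _ _ _ _ _ _ _ h).elim
  · exact (AB _ _ _ _ _ _ _ _ h').elim
  · have e33 := congrFun (congrFun h 3) 3
    have e23 := congrFun (congrFun h 2) 3
    have e13 := congrFun (congrFun h 1) 3
    have e03 := congrFun (congrFun h 0) 3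
    simp only [Matrix.mul_apply, Fin.sum_univ_four] at e33 e23 e13 e03
    simp [repZ, repB] at e33 e23 e13 e03
    rw [e33] at e03 e13 e23
    have hx : (x : ℕ) = x' := by
      refine fin_eq p 1 _ _ (by simpa using x.2) (by simpa using x'.2) (k 1 3) ?_
      linear_combination e13
    obtain rfl : x = x' := Fin.ext hx
    have hy : (y : ℕ) = y' := by
      refine fin_eq p 2 _ _ y.2 y'.2 (-k 2 3) ?_
      linear_combination -e23
    obtain rfl : y = y' := Fin.ext hy
    have k13 : k 1 3 = 0 := by
      apply mul_left_cancel₀ hp; linear_combination e13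
    have k23 : k 2 3 = 0 := by
      apply mul_left_cancel₀ (pow_ne_zero 2 hp); linear_combination e23
    rw [k13, k23] at e03
    have hz : (z : ℕ) = z' := by
      refine fin_eq p 3 _ _ z.2 z'.2 (k 0 3) ?_
      linear_combination e03
    obtain rfl : z = z' := Fin.ext hz
    rfl

lemma rep_fac (p : ℕ) [Fact p.Prime] (m n : ℕ) (i) : ∃ a ∈ KZ p m n, ∃ b ∈ KZ p m n,
    repZ p i = a * dd (p : ℤ_[p]) * b := by
  rcases i with ⟨w, x, y, z⟩ | ⟨x, y, z⟩
  · exact ⟨_, uu_mem p m n _ _ _ _, 1, one_mem p m n, by rw [uu_dd, mul_one]; rfl⟩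
  · refine ⟨_, KZ_mul p m n (vv_mem p m n (x : ℕ) (y : ℕ) (z : ℕ)) (ss_mem p m n), _,
      si_mem p m n, ?_⟩
    rw [mul_assoc, mul_assoc, ← mul_assoc (ss _), ss_dd, vv_dd]; rfl

lemma fac (p : ℕ) [Fact p.Prime] (m n : ℕ) (hn : 1 ≤ n) (k) (hk : k ∈ KZ p m n) :
    ∃ i, ∃ k' ∈ KZ p m n, k * dd (p : ℤ_[p]) = repZ p i * k' := by
  by_cases hu : IsUnit (k 2 2)
  · obtain ⟨w, x, y, z, k', h1, h2⟩ := caseA p m n hn k hk hu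
    exact ⟨Sum.inl (w, x, y, z), k', h1, h2⟩
  · obtain ⟨x, y, z, k', h1, h2⟩ := caseB p m n hn k hk hu
    exact ⟨Sum.inr (x, y, z), k', h1, h2⟩

lemma rep_sub (p : ℕ) [Fact p.Prime] (m n : ℕ) (i j)
    (h : ({rep6 p i} : Set (M4 ℚ_[p])) * Kmn1 p m n = {rep6 p j} * Kmn1 p m n) :
    ∃ k, repZ p i * k = repZ p j := by
  have h1 : rep6 p j ∈ ({rep6 p j} : Set (M4 ℚ_[p])) * Kmn1 p m n := by
    refine Set.mem_mul.2 ⟨_, rfl, 1, ?_, mul_one _⟩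
    rw [← map_one (toQ p)]
    exact (K_iff p m n 1).2 (one_mem p m n)
  rw [← h] at h1
  obtain ⟨_, rfl, k, hk, e⟩ := Set.mem_mul.1 h1
  obtain ⟨K, -, rfl⟩ := K_lift p m n k hk
  refine ⟨K, toQ_inj p ?_⟩
  rw [map_mul, rep_toQ, rep_toQ, e]

end Stmt6Aux

/-- Double coset decomposition of `K^{(1)}_{m,n} · diag(ℓ³,ℓ²,ℓ,1) · K^{(1)}_{m,n}` into
pairwise distinct left cosets. -/
theorem stmt6 (p : ℕ) [Fact p.Prime] (m n : ℕ) (hn : 1 ≤ n) :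
    (Kmn1 p m n *
        {Matrix.diagonal ![(p : ℚ_[p]) ^ 3, (p : ℚ_[p]) ^ 2, (p : ℚ_[p]), 1]} *
          Kmn1 p m n =
      ⋃ i : (Fin p × Fin p × Fin (p ^ 2) × Fin (p ^ 3)) ⊕
          (Fin p × Fin (p ^ 2) × Fin (p ^ 3)),
        ({rep6 p i} : Set (Matrix (Fin 4) (Fin 4) ℚ_[p])) * Kmn1 p m n) ∧
    Function.Injective
      (fun i : (Fin p × Fin p × Fin (p ^ 2) × Fin (p ^ 3)) ⊕
          (Fin p × Fin (p ^ 2) × Fin (p ^ 3)) =>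
        ({rep6 p i} : Set (Matrix (Fin 4) (Fin 4) ℚ_[p])) * Kmn1 p m n) := by
  constructor
  · ext g
    simp only [Set.mem_iUnion]
    constructor
    · intro hg
      obtain ⟨_, h1, k', hk', rfl⟩ := Set.mem_mul.1 hg
      obtain ⟨k, hk, _, rfl, rfl⟩ := Set.mem_mul.1 h1
      obtain ⟨K, hK, rfl⟩ := Stmt6Aux.K_lift p m n k hk
      obtain ⟨K', hK', rfl⟩ := Stmt6Aux.K_lift p m n k' hk'
      obtain ⟨i, L, hL, e⟩ := Stmt6Aux.fac p m n hn K hK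
      refine ⟨i, Set.mem_mul.2 ⟨_, rfl, Stmt6Aux.toQ p (L * K'),
        (Stmt6Aux.K_iff p m n _).2 (Stmt6Aux.KZ_mul p m n hL hK'), ?_⟩⟩
      rw [← Stmt6Aux.rep_toQ, ← Stmt6Aux.dd_toQ, ← map_mul, ← map_mul, ← map_mul, e, mul_assoc]
    · rintro ⟨i, hi⟩
      obtain ⟨_, rfl, k', hk', rfl⟩ := Set.mem_mul.1 hi
      obtain ⟨K', hK', rfl⟩ := Stmt6Aux.K_lift p m n k' hk'
      obtain ⟨a, ha, b, hb, e⟩ := Stmt6Aux.rep_fac p m n i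
      refine Set.mem_mul.2 ⟨_, Set.mem_mul.2 ⟨Stmt6Aux.toQ p a, (Stmt6Aux.K_iff p m n _).2 ha,
        _, rfl, rfl⟩, Stmt6Aux.toQ p (b * K'),
        (Stmt6Aux.K_iff p m n _).2 (Stmt6Aux.KZ_mul p m n hb hK'), ?_⟩
      rw [← Stmt6Aux.rep_toQ, ← Stmt6Aux.dd_toQ, ← map_mul, ← map_mul, ← map_mul, e, mul_assoc,
        mul_assoc, mul_assoc]
  · intro i j h
    obtain ⟨k, hk⟩ := Stmt6Aux.rep_sub p m n i j h
    obtain ⟨k', hk'⟩ := Stmt6Aux.rep_sub p m n j i h.symm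
    exact Stmt6Aux.rep_inj p i j k k' hk hk'
end
end

section
/- Let ℓ be a prime and m ≥ 0, n ≥ 1 integers. In GSp₄(ℚ_ℓ) one has the double coset decomposition B^{(1)}_{m,n} · diag(ℓ³, ℓ², ℓ, 1) · B^{(1)}_{m,n} = ⋃ M(w,x,y,z) · B^{(1)}_{m,n}, where M(w,x,y,z) has rows (ℓ³, ℓ²x, ℓwx+ℓy, z), (0, ℓ², ℓw, y), (0, 0, ℓ, −x), (0, 0, 0, 1) and the union is over 0 ≤ w, x < ℓ, 0 ≤ y < ℓ², 0 ≤ z < ℓ³; the ℓ⁷ listed left cosets are pairwise distinct. -/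
open Pointwise

noncomputable section

/-- The subgroup `B^{(1)}_{m,n}` of `GSp₄(ℤ_ℓ)`: integral symplectic similitudes with
multiplier `μ ≡ 1 (mod ℓ^m)`, all entries below the diagonal divisible by `ℓⁿ`, and
(4,4)-entry `≡ 1 (mod ℓⁿ)`, viewed inside the 4×4 matrices over `ℚ_ℓ`. -/
def Bmn1 (p : ℕ) [Fact p.Prime] (m n : ℕ) : Set (Matrix (Fin 4) (Fin 4) ℚ_[p]) :=
  {g | (∀ i j, ‖g i j‖ ≤ 1) ∧ ‖g.det‖ = 1 ∧
    (∃ μ : ℚ_[p], ‖μ‖ = 1 ∧ ‖μ - 1‖ ≤ (p : ℝ) ^ (-(m : ℤ)) ∧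
      g.transpose * Jmat p * g = μ • Jmat p) ∧
    ‖g 1 0‖ ≤ (p : ℝ) ^ (-(n : ℤ)) ∧ ‖g 2 0‖ ≤ (p : ℝ) ^ (-(n : ℤ)) ∧
    ‖g 2 1‖ ≤ (p : ℝ) ^ (-(n : ℤ)) ∧ ‖g 3 0‖ ≤ (p : ℝ) ^ (-(n : ℤ)) ∧
    ‖g 3 1‖ ≤ (p : ℝ) ^ (-(n : ℤ)) ∧ ‖g 3 2‖ ≤ (p : ℝ) ^ (-(n : ℤ)) ∧
    ‖g 3 3 - 1‖ ≤ (p : ℝ) ^ (-(n : ℤ))}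

/-- The coset representatives `M(w,x,y,z)` for `0 ≤ w,x < ℓ`, `0 ≤ y < ℓ²`,
`0 ≤ z < ℓ³`. -/
def rep10 (p : ℕ) [Fact p.Prime] :
    Fin p × Fin p × Fin (p ^ 2) × Fin (p ^ 3) → Matrix (Fin 4) (Fin 4) ℚ_[p] :=
  fun i => !![(p : ℚ_[p]) ^ 3, (p : ℚ_[p]) ^ 2 * ((i.2.1 : ℕ) : ℚ_[p]),
                (p : ℚ_[p]) * ((i.1 : ℕ) : ℚ_[p]) * ((i.2.1 : ℕ) : ℚ_[p]) +
                  (p : ℚ_[p]) * ((i.2.2.1 : ℕ) : ℚ_[p]), ((i.2.2.2 : ℕ) : ℚ_[p]);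
              0, (p : ℚ_[p]) ^ 2, (p : ℚ_[p]) * ((i.1 : ℕ) : ℚ_[p]),
                ((i.2.2.1 : ℕ) : ℚ_[p]);
              0, 0, (p : ℚ_[p]), -((i.2.1 : ℕ) : ℚ_[p]);
              0, 0, 0, 1]

/-- `x` is divisible by `p ^ k` in `ℤ_p`. -/
def PDiv (p : ℕ) [Fact p.Prime] (k : ℕ) (x : ℚ_[p]) : Prop := ‖x‖ ≤ (p : ℝ) ^ (-(k : ℤ))

namespace PDiv
variable {p : ℕ} [Fact p.Prime] {k l : ℕ} {x y : ℚ_[p]}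

theorem zero_iff : PDiv p 0 x ↔ ‖x‖ ≤ 1 := by simp [PDiv]

theorem add (hx : PDiv p k x) (hy : PDiv p k y) : PDiv p k (x + y) :=
  (IsUltrametricDist.norm_add_le_max x y).trans (max_le hx hy)

theorem neg (hx : PDiv p k x) : PDiv p k (-x) := by
  unfold PDiv at *; rwa [norm_neg]

theorem sub (hx : PDiv p k x) (hy : PDiv p k y) : PDiv p k (x - y) := by
  rw [sub_eq_add_neg]; exact hx.add hy.neg

theorem mul (hx : PDiv p k x) (hy : PDiv p l y) : PDiv p (k + l) (x * y) := by
  have hp : (p : ℝ) ≠ 0 := by exact_mod_cast (Fact.out : p.Prime).ne_zero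
  unfold PDiv at *
  rw [norm_mul, Nat.cast_add, neg_add, zpow_add₀ hp]
  exact mul_le_mul hx hy (norm_nonneg _) (by positivity)

theorem mono (h : l ≤ k) (hx : PDiv p k x) : PDiv p l x := by
  refine le_trans hx ?_
  apply zpow_le_zpow_right₀
  · exact_mod_cast (Fact.out : p.Prime).one_lt.le
  · omega

theorem mul_left (hx : PDiv p 0 x) (hy : PDiv p l y) : PDiv p l (x * y) := by
  simpa using hx.mul hy

theorem mul_right (hx : PDiv p l x) (hy : PDiv p 0 y) : PDiv p l (x * y) := by
  simpa using hx.mul hy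

theorem zero : PDiv p k 0 := by
  unfold PDiv; rw [norm_zero]; positivity

theorem one : PDiv p 0 1 := by simp [PDiv]

theorem nat (a : ℕ) : PDiv p 0 (a : ℚ_[p]) := by
  rw [zero_iff]; exact_mod_cast Padic.norm_int_le_one (p := p) (a : ℤ)

theorem pow : PDiv p k ((p : ℚ_[p]) ^ k) := by
  unfold PDiv; rw [norm_pow, Padic.norm_p]; simp

theorem exists_mul (hx : PDiv p k x) : ∃ c, PDiv p 0 c ∧ x = (p : ℚ_[p]) ^ k * c := by
  have hp0 : (p : ℚ_[p]) ≠ 0 := by exact_mod_cast (Fact.out : p.Prime).ne_zero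
  have hp : (0 : ℝ) < p := by exact_mod_cast (Fact.out : p.Prime).pos
  refine ⟨x / (p : ℚ_[p]) ^ k, ?_, by field_simp⟩
  rw [zero_iff, norm_div, norm_pow, Padic.norm_p]
  unfold PDiv at hx
  rw [zpow_neg, zpow_natCast] at hx
  rw [inv_pow]
  exact div_le_one_of_le₀ hx (by positivity)

theorem nat_eq {a b : ℕ} (ha : a < p ^ k) (hb : b < p ^ k)
    (h : PDiv p k ((a : ℚ_[p]) - b)) : a = b := by
  have h1 : ‖(((a : ℤ) - b : ℤ) : ℚ_[p])‖ ≤ (p : ℝ) ^ (-(k : ℤ)) := by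
    push_cast; exact h
  rw [Padic.norm_int_le_pow_iff_dvd] at h1
  have h2 := Int.eq_zero_of_abs_lt_dvd h1 (by
    rw [abs_lt]
    have ha' : (a : ℤ) < (p : ℤ) ^ k := by exact_mod_cast ha
    have hb' : (b : ℤ) < (p : ℤ) ^ k := by exact_mod_cast hb
    push_cast
    constructor <;> omega)
  omega

theorem exists_nat (k : ℕ) (hx : PDiv p 0 x) :
    ∃ a : ℕ, a < p ^ k ∧ PDiv p k (x - a) := by
  rw [zero_iff] at hx
  refine ⟨(PadicInt.appr ⟨x, hx⟩ k), PadicInt.appr_lt _ _, ?_⟩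
  have := PadicInt.appr_spec k (⟨x, hx⟩ : ℤ_[p])
  rw [← PadicInt.norm_le_pow_iff_mem_span_pow] at this
  rw [PadicInt.norm_def] at this
  unfold PDiv
  convert this using 2
  push_cast
  rfl

/-- Solve `u - a * v ≡ 0 (mod p ^ k)` for a unit `v`. -/
theorem exists_solve (k : ℕ) (hx : PDiv p 0 x) (hy : ‖y‖ = 1) :
    ∃ a : ℕ, a < p ^ k ∧ PDiv p k (x - a * y) := by
  have hy0 : y ≠ 0 := by rintro rfl; simp at hy
  obtain ⟨a, ha, h⟩ := exists_nat k (x := x / y) (by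
    rw [zero_iff] at *; rw [norm_div, hy]; simpa using hx)
  refine ⟨a, ha, ?_⟩
  have : x - a * y = (x / y - a) * y := by field_simp
  rw [this]
  exact h.mul_right (by rw [zero_iff, hy])

theorem of_mul_unit (hy : ‖y‖ = 1) (h : PDiv p k (x * y)) : PDiv p k x := by
  unfold PDiv at *; rwa [norm_mul, hy, mul_one] at h

theorem norm_lt (hk : 1 ≤ k) (h : PDiv p k x) : ‖x‖ < 1 := by
  have h1 := h.mono hk
  refine lt_of_le_of_lt h1 ?_
  have : (1 : ℝ) < p := by exact_mod_cast (Fact.out : p.Prime).one_lt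
  simpa using inv_lt_one_of_one_lt₀ this

/-- A `p`-adic number congruent to a unit is a unit. -/
theorem norm_eq_one (hk : 1 ≤ k) (h : PDiv p k (x - y)) (hy : ‖y‖ = 1) : ‖x‖ = 1 := by
  have h1 := norm_lt hk h
  have := IsUltrametricDist.norm_add_eq_max_of_norm_ne_norm (x := x - y) (y := y)
    (by rw [hy]; exact h1.ne)
  rw [sub_add_cancel, hy, max_eq_right h1.le] at this
  exact this

end PDiv

section helpers
variable {p : ℕ} [Fact p.Prime] {m n : ℕ}

theorem Bmn1_low {g : Matrix (Fin 4) (Fin 4) ℚ_[p]} (hg : g ∈ Bmn1 p m n) :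
    ∀ i j, j < i → PDiv p n (g i j) := by
  obtain ⟨-, -, -, h10, h20, h21, h30, h31, h32, -⟩ := hg
  intro i j hij
  fin_cases i <;> fin_cases j <;> first | (exfalso; revert hij; decide) | assumption

theorem Bmn1_int {g : Matrix (Fin 4) (Fin 4) ℚ_[p]} (hg : g ∈ Bmn1 p m n) :
    ∀ i j, PDiv p 0 (g i j) := fun i j => PDiv.zero_iff.2 (hg.1 i j)

theorem Bmn1_mk {g : Matrix (Fin 4) (Fin 4) ℚ_[p]} (h0 : ∀ i j, PDiv p 0 (g i j))
    (hd : ‖g.det‖ = 1)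
    (hs : ∃ μ : ℚ_[p], ‖μ‖ = 1 ∧ ‖μ - 1‖ ≤ (p : ℝ) ^ (-(m : ℤ)) ∧
      g.transpose * Jmat p * g = μ • Jmat p)
    (hl : ∀ i j, j < i → PDiv p n (g i j)) (h3 : PDiv p n (g 3 3 - 1)) :
    g ∈ Bmn1 p m n :=
  ⟨fun i j => PDiv.zero_iff.1 (h0 i j), hd, hs, hl _ _ (by decide), hl _ _ (by decide),
    hl _ _ (by decide), hl _ _ (by decide), hl _ _ (by decide), hl _ _ (by decide), h3⟩

theorem PDiv.sum4 {k : ℕ} {f : Fin 4 → ℚ_[p]} (h : ∀ i, PDiv p k (f i)) :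
    PDiv p k (∑ i, f i) := by
  rw [Fin.sum_univ_four]
  exact (((h 0).add (h 1)).add (h 2)).add (h 3)

theorem Bmn1_mul {a b : Matrix (Fin 4) (Fin 4) ℚ_[p]} (ha : a ∈ Bmn1 p m n)
    (hb : b ∈ Bmn1 p m n) : a * b ∈ Bmn1 p m n := by
  have ha0 := Bmn1_int ha
  have hb0 := Bmn1_int hb
  have hal := Bmn1_low ha
  have hbl := Bmn1_low hb
  refine Bmn1_mk ?_ ?_ ?_ ?_ ?_
  · intro i j
    rw [Matrix.mul_apply]
    exact PDiv.sum4 fun k => (ha0 i k).mul_left (hb0 k j)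
  · rw [Matrix.det_mul, norm_mul, ha.2.1, hb.2.1, mul_one]
  · obtain ⟨μ, h1, h2, h3⟩ := ha.2.2.1
    obtain ⟨ν, k1, k2, k3⟩ := hb.2.2.1
    refine ⟨μ * ν, by rw [norm_mul, h1, k1, mul_one], ?_, ?_⟩
    · have : μ * ν - 1 = μ * (ν - 1) + (μ - 1) := by ring
      rw [this]
      exact PDiv.add (PDiv.mul_left (PDiv.zero_iff.2 h1.le) k2) h2
    · rw [Matrix.transpose_mul]
      calc b.transpose * a.transpose * Jmat p * (a * b)
          = b.transpose * (a.transpose * Jmat p * a) * b := by simp only [Matrix.mul_assoc]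
        _ = _ := by rw [h3, Matrix.mul_smul, Matrix.smul_mul, k3, smul_smul]
  · intro i j hij
    rw [Matrix.mul_apply]
    refine PDiv.sum4 fun k => ?_
    rcases lt_or_ge k i with h | h
    · exact (hal i k h).mul_right (hb0 k j)
    · exact (ha0 i k).mul_left (hbl k j (lt_of_lt_of_le hij h))
  · rw [Matrix.mul_apply, Fin.sum_univ_four]
    have : a 3 0 * b 0 3 + a 3 1 * b 1 3 + a 3 2 * b 2 3 + a 3 3 * b 3 3 - 1
      = a 3 0 * b 0 3 + a 3 1 * b 1 3 + a 3 2 * b 2 3 + ((a 3 3 - 1) * b 3 3 + (b 3 3 - 1)) := by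
      ring
    rw [this]
    have h3a : PDiv p n (a 3 3 - 1) := ha.2.2.2.2.2.2.2.2.2
    have h3b : PDiv p n (b 3 3 - 1) := hb.2.2.2.2.2.2.2.2.2
    exact ((((hal 3 0 (by decide)).mul_right (hb0 _ _)).add
      ((hal 3 1 (by decide)).mul_right (hb0 _ _))).add
      ((hal 3 2 (by decide)).mul_right (hb0 _ _))).add ((h3a.mul_right (hb0 _ _)).add h3b)

/-- The unipotent matrix `U(w,x,y,z)`. -/
def Umat (w x y z : ℚ_[p]) : Matrix (Fin 4) (Fin 4) ℚ_[p] :=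
  !![1, x, w * x + y, z; 0, 1, w, y; 0, 0, 1, -x; 0, 0, 0, 1]

theorem Umat_mem {w x y z : ℚ_[p]} (hw : PDiv p 0 w) (hx : PDiv p 0 x) (hy : PDiv p 0 y)
    (hz : PDiv p 0 z) : Umat w x y z ∈ Bmn1 p m n := by
  have h0 : PDiv p 0 (0 : ℚ_[p]) := PDiv.zero
  have h1 : PDiv p 0 (1 : ℚ_[p]) := PDiv.one
  have hwx : PDiv p 0 (w * x + y) := (hw.mul_left hx).add hy
  have hnx := hx.neg
  refine Bmn1_mk ?_ ?_ ⟨1, by simp, ?_, ?_⟩ ?_ ?_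
  · intro i j
    fin_cases i <;> fin_cases j <;> assumption
  · have : (Umat w x y z).det = 1 := by
      simp [Umat, Matrix.det_succ_row_zero, Fin.sum_univ_succ, Fin.succAbove]
    rw [this]; simp
  · simp
  · ext i j
    fin_cases i <;> fin_cases j <;>
      simp [Umat, Jmat, Matrix.mul_apply, Fin.sum_univ_four] <;> ring
  · intro i j hij
    fin_cases i <;> fin_cases j <;>
      first | (exfalso; revert hij; decide) | exact PDiv.zero
  · simpa [Umat] using (PDiv.zero : PDiv p n 0)

/-- The diagonal matrix. -/
def Dmat (p : ℕ) [Fact p.Prime] : Matrix (Fin 4) (Fin 4) ℚ_[p] :=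
  Matrix.diagonal ![(p : ℚ_[p]) ^ 3, (p : ℚ_[p]) ^ 2, (p : ℚ_[p]), 1]

theorem rep10_eq (i : Fin p × Fin p × Fin (p ^ 2) × Fin (p ^ 3)) :
    rep10 p i = Umat ((i.1 : ℕ) : ℚ_[p]) ((i.2.1 : ℕ) : ℚ_[p]) ((i.2.2.1 : ℕ) : ℚ_[p])
      ((i.2.2.2 : ℕ) : ℚ_[p]) * Dmat p := by
  ext a b
  rw [Dmat, Matrix.mul_diagonal]
  fin_cases a <;> fin_cases b <;> simp [rep10, Umat] <;> ring

/-- Conjugation by `D` of a suitably divisible element stays in `B`. -/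
theorem conj_mem {h : Matrix (Fin 4) (Fin 4) ℚ_[p]} (hh : h ∈ Bmn1 p m n)
    (h01 : PDiv p 1 (h 0 1)) (h02 : PDiv p 2 (h 0 2)) (h03 : PDiv p 3 (h 0 3))
    (h12 : PDiv p 1 (h 1 2)) (h13 : PDiv p 2 (h 1 3)) (h23 : PDiv p 1 (h 2 3)) :
    ∃ k ∈ Bmn1 p m n, h * Dmat p = Dmat p * k := by
  have hp0 : (p : ℚ_[p]) ≠ 0 := by exact_mod_cast (Fact.out : p.Prime).ne_zero
  obtain ⟨c01, e01, q01⟩ := h01.exists_mul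
  obtain ⟨c02, e02, q02⟩ := h02.exists_mul
  obtain ⟨c03, e03, q03⟩ := h03.exists_mul
  obtain ⟨c12, e12, q12⟩ := h12.exists_mul
  obtain ⟨c13, e13, q13⟩ := h13.exists_mul
  obtain ⟨c23, e23, q23⟩ := h23.exists_mul
  have hl := Bmn1_low hh
  have hi := Bmn1_int hh
  have hp1 : PDiv p 0 (p : ℚ_[p]) := PDiv.nat p
  have hp2 : PDiv p 0 ((p : ℚ_[p]) ^ 2) := PDiv.pow.mono (Nat.zero_le _)
  have hp3 : PDiv p 0 ((p : ℚ_[p]) ^ 3) := PDiv.pow.mono (Nat.zero_le _)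
  have l10 := hp1.mul_left (hl 1 0 (by decide))
  have l20 := hp2.mul_left (hl 2 0 (by decide))
  have l21 := hp1.mul_left (hl 2 1 (by decide))
  have l30 := hp3.mul_left (hl 3 0 (by decide))
  have l31 := hp2.mul_left (hl 3 1 (by decide))
  have l32 := hp1.mul_left (hl 3 2 (by decide))
  have key : h * Dmat p = Dmat p * !![h 0 0, c01, c02, c03; p * h 1 0, h 1 1, c12, c13;
      p ^ 2 * h 2 0, p * h 2 1, h 2 2, c23; p ^ 3 * h 3 0, p ^ 2 * h 3 1, p * h 3 2, h 3 3] := by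
    ext a b
    rw [Dmat, Matrix.mul_diagonal, Matrix.diagonal_mul]
    fin_cases a <;> fin_cases b <;> simp [q01, q02, q03, q12, q13, q23] <;> ring
  refine ⟨_, ?_, key⟩
  generalize hk : !![h 0 0, c01, c02, c03; p * h 1 0, h 1 1, c12, c13;
      p ^ 2 * h 2 0, p * h 2 1, h 2 2, c23; p ^ 3 * h 3 0, p ^ 2 * h 3 1, p * h 3 2, h 3 3] = k
      at key
  have kl : ∀ i j, j < i → PDiv p n (k i j) := by
    subst hk
    intro i j hij
    fin_cases i <;> fin_cases j <;> first | (exfalso; revert hij; decide) | assumption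
  have hDdet : (Dmat p).det ≠ 0 := by
    simp [Dmat, Matrix.det_diagonal, Fin.prod_univ_four, hp0]
  refine Bmn1_mk ?_ ?_ ?_ kl ?_
  · intro i j
    rcases lt_or_ge j i with hij | hij
    · exact (kl i j hij).mono (Nat.zero_le _)
    · subst hk
      fin_cases i <;> fin_cases j <;>
        first | (exfalso; revert hij; decide) | assumption | exact hi _ _
  · have := congrArg Matrix.det key
    rw [Matrix.det_mul, Matrix.det_mul, mul_comm] at this
    rw [← mul_left_cancel₀ hDdet this]; exact hh.2.1
  · obtain ⟨μ, h1, h2, h3⟩ := hh.2.2.1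
    refine ⟨μ, h1, h2, ?_⟩
    have hDJ : (Dmat p).transpose * Jmat p * Dmat p = (p : ℚ_[p]) ^ 3 • Jmat p := by
      ext a b
      rw [Dmat, Matrix.diagonal_transpose, Matrix.mul_diagonal, Matrix.diagonal_mul]
      fin_cases a <;> fin_cases b <;> simp [Jmat] <;> ring
    have e1 : (p : ℚ_[p]) ^ 3 • (k.transpose * Jmat p * k)
        = (p : ℚ_[p]) ^ 3 • (μ • Jmat p) := by
      calc (p : ℚ_[p]) ^ 3 • (k.transpose * Jmat p * k)
          = k.transpose * ((Dmat p).transpose * Jmat p * Dmat p) * k := by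
            rw [hDJ, Matrix.mul_smul, Matrix.smul_mul]
        _ = (Dmat p * k).transpose * Jmat p * (Dmat p * k) := by
            rw [Matrix.transpose_mul]; simp only [Matrix.mul_assoc]
        _ = (Dmat p).transpose * (h.transpose * Jmat p * h) * Dmat p := by
            rw [← key, Matrix.transpose_mul]; simp only [Matrix.mul_assoc]
        _ = _ := by rw [h3, Matrix.mul_smul, Matrix.smul_mul, hDJ, smul_comm]
    exact smul_right_injective _ (pow_ne_zero 3 hp0) e1
  · have : k 3 3 = h 3 3 := by subst hk; rfl
    rw [this]; exact hh.2.2.2.2.2.2.2.2.2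

theorem Umat_mul_inv (w x y z : ℚ_[p]) :
    Umat w x y z * Umat (-w) (-x) (-y - w * x) (-z) = 1 := by
  ext a b
  fin_cases a <;> fin_cases b <;>
    simp [Umat, Matrix.mul_apply, Fin.sum_univ_four] <;> ring

theorem one_mem : (1 : Matrix (Fin 4) (Fin 4) ℚ_[p]) ∈ Bmn1 p m n := by
  have : (1 : Matrix (Fin 4) (Fin 4) ℚ_[p]) = Umat 0 0 0 0 := by
    ext a b
    fin_cases a <;> fin_cases b <;> simp [Umat]
  rw [this]
  exact Umat_mem PDiv.zero PDiv.zero PDiv.zero PDiv.zero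

/-- The relation between columns 1 and 2, 1 and 3, and 2 and 3 of a symplectic similitude. -/
theorem symp_rel {g : Matrix (Fin 4) (Fin 4) ℚ_[p]} {μ : ℚ_[p]}
    (h : g.transpose * Jmat p * g = μ • Jmat p) :
    g 0 1 * g 3 2 + g 1 1 * g 2 2 - g 2 1 * g 1 2 - g 3 1 * g 0 2 = μ ∧
    g 0 1 * g 3 3 + g 1 1 * g 2 3 - g 2 1 * g 1 3 - g 3 1 * g 0 3 = 0 ∧
    g 0 2 * g 3 3 + g 1 2 * g 2 3 - g 2 2 * g 1 3 - g 3 2 * g 0 3 = 0 := by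
  have e := fun i j => congrFun (congrFun h i) j
  have e1 := e 1 2
  have e2 := e 1 3
  have e3 := e 2 3
  simp [Jmat, Matrix.mul_apply, Fin.sum_univ_four] at e1 e2 e3
  refine ⟨?_, ?_, ?_⟩
  · rw [← e1]; ring
  · rw [← e2]; ring
  · rw [← e3]; ring

theorem diag_units (hn : 1 ≤ n) {g : Matrix (Fin 4) (Fin 4) ℚ_[p]} (hg : g ∈ Bmn1 p m n) :
    ‖g 3 3‖ = 1 ∧ ‖g 2 2‖ = 1 := by
  have hi := Bmn1_int hg
  have hl := Bmn1_low hg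
  have h3 : PDiv p n (g 3 3 - 1) := hg.2.2.2.2.2.2.2.2.2
  refine ⟨PDiv.norm_eq_one hn h3 (by simp), ?_⟩
  obtain ⟨μ, h1, -, h⟩ := hg.2.2.1
  have e := (symp_rel h).1
  have : ‖g 1 1 * g 2 2‖ = 1 := by
    refine PDiv.norm_eq_one hn (y := μ) ?_ h1
    have e' : g 1 1 * g 2 2 - μ = g 2 1 * g 1 2 + g 3 1 * g 0 2 - g 0 1 * g 3 2 := by
      rw [← e]; ring
    rw [e']
    exact (((hl 2 1 (by decide)).mul_right (hi _ _)).add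
      ((hl 3 1 (by decide)).mul_right (hi _ _))).sub ((hi _ _).mul_left (hl 3 2 (by decide)))
  rw [norm_mul] at this
  have a1 := hg.1 1 1
  have a2 := hg.1 2 2
  nlinarith [norm_nonneg (g 1 1), norm_nonneg (g 2 2)]

/-- The key decomposition: `g * D` lies in the left coset of one of the representatives. -/
theorem decomp (hn : 1 ≤ n) {g : Matrix (Fin 4) (Fin 4) ℚ_[p]} (hg : g ∈ Bmn1 p m n) :
    ∃ i, ∃ k ∈ Bmn1 p m n, g * Dmat p = rep10 p i * k := by
  have hi := Bmn1_int hg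
  have hl := Bmn1_low hg
  obtain ⟨u3, u2⟩ := diag_units hn hg
  obtain ⟨x, hx, ex⟩ := PDiv.exists_solve 1 (hi 2 3).neg u3
  obtain ⟨w, hw, ew⟩ := PDiv.exists_solve 1 (hi 1 2) u2
  have ix : PDiv p 0 (x : ℚ_[p]) := PDiv.nat x
  have iw : PDiv p 0 (w : ℚ_[p]) := PDiv.nat w
  obtain ⟨y, hy, ey⟩ := PDiv.exists_solve 2
    ((hi 1 3).sub (iw.mul_left ((hi 2 3).add (ix.mul_left (hi 3 3))))) u3
  have iy : PDiv p 0 (y : ℚ_[p]) := PDiv.nat y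
  obtain ⟨z, hz, ez⟩ := PDiv.exists_solve 3
    (((hi 0 3).sub (ix.mul_left (hi 1 3))).sub (iy.mul_left (hi 2 3))) u3
  have iz : PDiv p 0 (z : ℚ_[p]) := PDiv.nat z
  have hV : Umat (-w : ℚ_[p]) (-x) (-y - w * x) (-z) ∈ Bmn1 p m n :=
    Umat_mem iw.neg ix.neg (iy.neg.sub (iw.mul_left ix)) iz.neg
  obtain ⟨h, hdef⟩ : ∃ h, h = Umat (-w : ℚ_[p]) (-x) (-y - w * x) (-z) * g := ⟨_, rfl⟩
  have hh : h ∈ Bmn1 p m n := hdef ▸ Bmn1_mul hV hg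
  have hgU : g = Umat (w : ℚ_[p]) x y z * h := by
    rw [hdef, ← Matrix.mul_assoc, Umat_mul_inv, Matrix.one_mul]
  have hhi := Bmn1_int hh
  have hhl := Bmn1_low hh
  have h23 : PDiv p 1 (h 2 3) := by
    have : h 2 3 = -(-g 2 3 - x * g 3 3) := by
      rw [hdef, Matrix.mul_apply, Fin.sum_univ_four]; simp [Umat]; ring
    rw [this]; exact ex.neg
  have h12 : PDiv p 1 (h 1 2) := by
    have : h 1 2 = (g 1 2 - w * g 2 2) + (-y - w * x) * g 3 2 := by
      rw [hdef, Matrix.mul_apply, Fin.sum_univ_four]; simp [Umat]; ring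
    rw [this]
    exact ew.add ((iy.neg.sub (iw.mul_left ix)).mul_left ((hl 3 2 (by decide)).mono hn))
  have h13 : PDiv p 2 (h 1 3) := by
    have : h 1 3 = g 1 3 - w * (g 2 3 + x * g 3 3) - y * g 3 3 := by
      rw [hdef, Matrix.mul_apply, Fin.sum_univ_four]; simp [Umat]; ring
    rw [this]; exact ey
  have h03 : PDiv p 3 (h 0 3) := by
    have : h 0 3 = g 0 3 - x * g 1 3 - y * g 2 3 - z * g 3 3 := by
      rw [hdef, Matrix.mul_apply, Fin.sum_univ_four]; simp [Umat]; ring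
    rw [this]; exact ez
  have u3' := (diag_units hn hh).1
  obtain ⟨μ, -, -, hs⟩ := hh.2.2.1
  obtain ⟨-, s1, s2⟩ := symp_rel hs
  have h01 : PDiv p 1 (h 0 1) := by
    refine PDiv.of_mul_unit u3' ?_
    have : h 0 1 * h 3 3 = h 2 1 * h 1 3 + h 3 1 * h 0 3 - h 1 1 * h 2 3 := by
      linear_combination s1
    rw [this]
    exact (((hhi _ _).mul_left (h13.mono (by omega))).add
      ((hhi _ _).mul_left (h03.mono (by omega)))).sub ((hhi _ _).mul_left h23)
  have h02 : PDiv p 2 (h 0 2) := by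
    refine PDiv.of_mul_unit u3' ?_
    have : h 0 2 * h 3 3 = h 2 2 * h 1 3 + h 3 2 * h 0 3 - h 1 2 * h 2 3 := by
      linear_combination s2
    rw [this]
    exact (((hhi _ _).mul_left h13).add
      ((hhi _ _).mul_left (h03.mono (by omega)))).sub (h12.mul h23)
  obtain ⟨k, hk, e⟩ := conj_mem hh h01 h02 h03 h12 h13 h23
  refine ⟨(⟨w, by simpa using hw⟩, ⟨x, by simpa using hx⟩, ⟨y, hy⟩, ⟨z, hz⟩), k, hk, ?_⟩
  rw [rep10_eq, Matrix.mul_assoc, ← e, ← Matrix.mul_assoc, ← hgU]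

theorem rep_inj_s10 {i j : Fin p × Fin p × Fin (p ^ 2) × Fin (p ^ 3)}
    {b : Matrix (Fin 4) (Fin 4) ℚ_[p]} (hb : b ∈ Bmn1 p m n)
    (h : rep10 p i = rep10 p j * b) : i = j := by
  have hp0 : (p : ℚ_[p]) ≠ 0 := by exact_mod_cast (Fact.out : p.Prime).ne_zero
  have hi := Bmn1_int hb
  obtain ⟨⟨w, hw⟩, ⟨x, hx⟩, ⟨y, hy⟩, ⟨z, hz⟩⟩ := i
  obtain ⟨⟨w', hw'⟩, ⟨x', hx'⟩, ⟨y', hy'⟩, ⟨z', hz'⟩⟩ := j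
  have e := fun i j => congrFun (congrFun h i) j
  have e32 := e 3 2
  have e33 := e 3 3
  have e22 := e 2 2
  have e23 := e 2 3
  have e12 := e 1 2
  have e13 := e 1 3
  have e03 := e 0 3
  simp [rep10, Matrix.mul_apply, Fin.sum_univ_four] at e32 e33 e22 e23 e12 e13 e03
  have b22 : b 2 2 = 1 := by
    apply mul_left_cancel₀ hp0
    rw [← e32] at e22
    linear_combination -e22
  rw [← e33] at e23 e13 e03
  rw [← e32, b22] at e12
  have xx : x' = x := by
    refine PDiv.nat_eq (p := p) (k := 1) (by simpa using hx') (by simpa using hx) ?_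
    have : (x' : ℚ_[p]) - x = (p : ℚ_[p]) ^ 1 * b 2 3 := by linear_combination e23
    rw [this]
    exact PDiv.pow.mul_right (hi _ _)
  subst xx
  have b23 : b 2 3 = 0 := by
    apply mul_left_cancel₀ hp0
    linear_combination -e23
  rw [b23] at e13 e03
  have ww : w = w' := by
    refine PDiv.nat_eq (p := p) (k := 1) (by simpa using hw) (by simpa using hw') ?_
    have : (w : ℚ_[p]) - w' = (p : ℚ_[p]) ^ 1 * b 1 2 := by
      apply mul_left_cancel₀ hp0
      linear_combination e12
    rw [this]
    exact PDiv.pow.mul_right (hi _ _)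
  subst ww
  have yy : y = y' := by
    refine PDiv.nat_eq (p := p) hy hy' ?_
    have : (y : ℚ_[p]) - y' = (p : ℚ_[p]) ^ 2 * b 1 3 := by linear_combination e13
    rw [this]
    exact PDiv.pow.mul_right (hi _ _)
  subst yy
  have b13 : b 1 3 = 0 := by
    apply mul_left_cancel₀ (pow_ne_zero 2 hp0)
    linear_combination -e13
  rw [b13] at e03
  have zz : z = z' := by
    refine PDiv.nat_eq (p := p) hz hz' ?_
    have : (z : ℚ_[p]) - z' = (p : ℚ_[p]) ^ 3 * b 0 3 := by linear_combination e03
    rw [this]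
    exact PDiv.pow.mul_right (hi _ _)
  subst zz
  rfl

end helpers

/-- Double coset decomposition of `B^{(1)}_{m,n} · diag(ℓ³,ℓ²,ℓ,1) · B^{(1)}_{m,n}` into
`ℓ⁷` pairwise distinct left cosets. -/
theorem stmt10 (p : ℕ) [Fact p.Prime] (m n : ℕ) (hn : 1 ≤ n) :
    (Bmn1 p m n *
        {Matrix.diagonal ![(p : ℚ_[p]) ^ 3, (p : ℚ_[p]) ^ 2, (p : ℚ_[p]), 1]} *
          Bmn1 p m n =
      ⋃ i : Fin p × Fin p × Fin (p ^ 2) × Fin (p ^ 3),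
        ({rep10 p i} : Set (Matrix (Fin 4) (Fin 4) ℚ_[p])) * Bmn1 p m n) ∧
    Function.Injective
      (fun i : Fin p × Fin p × Fin (p ^ 2) × Fin (p ^ 3) =>
        ({rep10 p i} : Set (Matrix (Fin 4) (Fin 4) ℚ_[p])) * Bmn1 p m n) := by
  constructor
  · ext q
    rw [Set.mem_iUnion]
    constructor
    · intro hq
      obtain ⟨gd, ⟨g, hg, d, hd, rfl⟩, b, hb, rfl⟩ := hq
      rw [Set.mem_singleton_iff] at hd
      subst hd
      obtain ⟨i, k, hk, e⟩ := decomp hn hg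
      refine ⟨i, rep10 p i, rfl, k * b, Bmn1_mul hk hb, ?_⟩
      change rep10 p i * (k * b) = g * Dmat p * b
      rw [e, Matrix.mul_assoc]
    · rintro ⟨i, r, hr, b, hb, rfl⟩
      rw [Set.mem_singleton_iff] at hr
      subst hr
      exact ⟨rep10 p i, ⟨_, Umat_mem (PDiv.nat _) (PDiv.nat _) (PDiv.nat _) (PDiv.nat _),
        _, rfl, (rep10_eq i).symm⟩, b, hb, rfl⟩
  · intro i j hij
    have h1 : rep10 p i ∈ ({rep10 p i} : Set (Matrix (Fin 4) (Fin 4) ℚ_[p])) * Bmn1 p m n :=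
      ⟨_, rfl, 1, one_mem, Matrix.mul_one _⟩
    have hij' : ({rep10 p i} : Set (Matrix (Fin 4) (Fin 4) ℚ_[p])) * Bmn1 p m n
      = ({rep10 p j} : Set (Matrix (Fin 4) (Fin 4) ℚ_[p])) * Bmn1 p m n := hij
    rw [hij'] at h1
    obtain ⟨r, hr, b, hb, e⟩ := h1
    rw [Set.mem_singleton_iff] at hr
    subst hr
    exact rep_inj_s10 hb e.symm
end
end
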